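/- arXiv:1609.00284 — 7 statements merged into one kernel-verified Lean document; each statement's English description precedes it below -/
import Mathlib

section
/- Let L be a linear forest with k vertices. If G and G' are linear forests with the same number of vertices and the same number of edges, and every connected component of G and of G' has at least k−1 vertices, then s(G, L) = s(G', L). -/
open SimpleGraph

/-- `SameDeck G G' k`: `G` and `G'` have the same `k`-deck, i.e. for every simple graph `H`
on `k` vertices, the number of `k`-element vertex subsets of `G` inducing a subgraph
isomorphic to `H` equals the corresponding number for `G'`. -/
def SameDeck {V W : Type*} [Fintype V] [Fintype W]
    (G : SimpleGraph V) (G' : SimpleGraph W) (k : ℕ) : Prop :=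
  ∀ H : SimpleGraph (Fin k),
    Set.ncard {s : Finset V | s.card = k ∧ Nonempty ((G.induce (↑s : Set V)) ≃g H)} =
    Set.ncard {s : Finset W | s.card = k ∧ Nonempty ((G'.induce (↑s : Set W)) ≃g H)}

/-- `copies G H = s(G,H)`, the number of vertex subsets of `G` whose induced subgraph is
isomorphic to `H`. -/
noncomputable def copies {V W : Type*} [Fintype V]
    (G : SimpleGraph V) (H : SimpleGraph W) : ℕ :=
  Set.ncard {s : Finset V | Nonempty ((G.induce (↑s : Set V)) ≃g H)}

/-- The connected component `c` of `G` is a path on `m` vertices. -/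
def CompIsPath {V : Type*} (G : SimpleGraph V) (c : G.ConnectedComponent) (m : ℕ) : Prop :=
  Nonempty ((G.induce c.supp) ≃g pathGraph m)

/-- The connected component `c` of `G` is a cycle on `m` vertices (`m ≥ 3`). -/
def CompIsCycle {V : Type*} (G : SimpleGraph V) (c : G.ConnectedComponent) (m : ℕ) : Prop :=
  3 ≤ m ∧ Nonempty ((G.induce c.supp) ≃g cycleGraph m)

/-- A linear forest: every connected component is a path. -/
def IsLinearForest {V : Type*} (G : SimpleGraph V) : Prop :=
  ∀ c : G.ConnectedComponent, ∃ m : ℕ, CompIsPath G c m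


def ZP : SimpleGraph ℤ where
  Adj x y := x + 1 = y ∨ y + 1 = x
  symm := ⟨fun x y h => h.symm⟩
  loopless := ⟨fun x h => by omega⟩

theorem ZP_adj (x y : ℤ) : ZP.Adj x y ↔ (x + 1 = y ∨ y + 1 = x) := Iff.rfl

theorem exJ (d : ℤ) (S : Finset ℤ) : ∃ j : ℕ, d - j ∉ S ∧ d + 1 + j ∉ S := by
  by_contra! h
  have : Finset.card (Finset.range (S.card + 1)) ≤ S.card := by
    apply Finset.card_le_card_of_injOn (fun j : ℕ => if d - j ∈ S then d - j else d + 1 + j)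
    · intro j _
      have := h j
      dsimp only
      split_ifs with h1
      · exact h1
      · exact this h1
    · intro a _ b _ hab
      dsimp only at hab
      split_ifs at hab <;> omega
  simp at this

noncomputable def Jf (d : ℤ) (S : Finset ℤ) : ℕ := Nat.find (exJ d S)

theorem Jf_spec (d : ℤ) (S : Finset ℤ) : d - Jf d S ∉ S ∧ d + 1 + Jf d S ∉ S :=
  Nat.find_spec (exJ d S)

theorem Jf_min (d : ℤ) (S : Finset ℤ) (j : ℕ) (h : j < Jf d S) : d - j ∈ S ∨ d + 1 + j ∈ S := by
  have := Nat.find_min (exJ d S) h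
  tauto

theorem Jf_unique (d : ℤ) (S : Finset ℤ) (n : ℕ) (h : d - n ∉ S ∧ d + 1 + n ∉ S)
    (h2 : ∀ j : ℕ, j < n → d - j ∈ S ∨ d + 1 + j ∈ S) : Jf d S = n := by
  apply le_antisymm
  · exact Nat.find_min' (exJ d S) h
  · by_contra! hlt
    have := h2 _ hlt
    have := Jf_spec d S
    tauto

theorem Jf_le (d : ℤ) (S : Finset ℤ) : Jf d S ≤ S.card := by
  have : Finset.card (Finset.range (Jf d S)) ≤ S.card := by
    apply Finset.card_le_card_of_injOn (fun j : ℕ => if d - j ∈ S then d - j else d + 1 + j)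
    · intro j hj
      have := Jf_min d S j (by simpa using hj)
      dsimp only
      split_ifs with h1
      · exact h1
      · exact this.resolve_left h1
    · intro a _ b _ hab
      dsimp only at hab
      split_ifs at hab <;> omega
  simpa using this

/-- reflect the window of radius `J`. -/
def sg (d : ℤ) (J : ℕ) (x : ℤ) : ℤ := if d - J < x ∧ x < d + 1 + J then 2 * d + 1 - x else x

theorem sg_sg (d : ℤ) (J : ℕ) (x : ℤ) : sg d J (sg d J x) = x := by
  unfold sg; split_ifs <;> omega

theorem sg_inj (d : ℤ) (J : ℕ) : Function.Injective (sg d J) :=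
  Function.LeftInverse.injective (sg_sg d J)

noncomputable def Tf (d : ℤ) (S : Finset ℤ) : Finset ℤ := S.image (sg d (Jf d S))

theorem mem_Tf (d : ℤ) (S : Finset ℤ) (x : ℤ) : x ∈ Tf d S ↔ sg d (Jf d S) x ∈ S := by
  unfold Tf
  rw [Finset.mem_image]
  constructor
  · rintro ⟨y, hy, rfl⟩
    rwa [sg_sg]
  · intro h
    exact ⟨_, h, sg_sg _ _ _⟩

theorem Jf_Tf (d : ℤ) (S : Finset ℤ) : Jf d (Tf d S) = Jf d S := by
  have hs := Jf_spec d S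
  apply Jf_unique
  · rw [mem_Tf, mem_Tf]
    unfold sg
    rw [if_neg (by omega), if_neg (by omega)]
    exact hs
  · intro j hj
    rw [mem_Tf, mem_Tf]
    unfold sg
    rw [if_pos (by omega), if_pos (by omega)]
    have := Jf_min d S j hj
    rw [show 2 * d + 1 - (d - (j:ℤ)) = d + 1 + j by ring,
      show 2 * d + 1 - (d + 1 + (j:ℤ)) = d - j by ring]
    exact this.symm

theorem Tf_Tf (d : ℤ) (S : Finset ℤ) : Tf d (Tf d S) = S := by
  ext x
  rw [mem_Tf, mem_Tf, Jf_Tf, sg_sg]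

theorem Tf_d (d : ℤ) (S : Finset ℤ) : (d ∈ Tf d S ↔ d + 1 ∈ S) ∧ (d + 1 ∈ Tf d S ↔ d ∈ S) := by
  rw [mem_Tf, mem_Tf]
  have hs := Jf_spec d S
  unfold sg
  by_cases h : Jf d S = 0
  · rw [h] at hs ⊢
    simp at hs
    simp [hs]
  · rw [if_pos (by omega), if_pos (by omega)]
    rw [show 2 * d + 1 - d = d + 1 by ring, show 2 * d + 1 - (d + 1) = d by ring]
    simp

noncomputable def Tf_iso (d : ℤ) (S : Finset ℤ) :
    ZP.induce (↑S : Set ℤ) ≃g ZP.induce (↑(Tf d S) : Set ℤ) where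
  toFun x := ⟨sg d (Jf d S) x.1, by
    have := x.2
    simp only [Finset.mem_coe] at this ⊢
    rw [mem_Tf, sg_sg]; exact this⟩
  invFun x := ⟨sg d (Jf d S) x.1, by
    have := x.2
    simp only [Finset.mem_coe] at this ⊢
    rwa [mem_Tf] at this⟩
  left_inv x := by simp [sg_sg]
  right_inv x := by simp [sg_sg]
  map_rel_iff' := by
    rintro ⟨x, hx⟩ ⟨y, hy⟩
    have hs := Jf_spec d S
    simp only [Finset.mem_coe] at hx hy
    have h1 : x ≠ d - Jf d S := fun h => hs.1 (h ▸ hx)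
    have h2 : x ≠ d + 1 + Jf d S := fun h => hs.2 (h ▸ hx)
    have h3 : y ≠ d - Jf d S := fun h => hs.1 (h ▸ hy)
    have h4 : y ≠ d + 1 + Jf d S := fun h => hs.2 (h ▸ hy)
    simp only [Equiv.coe_fn_mk, comap_adj, Function.Embedding.subtype_apply, ZP_adj]
    unfold sg
    split_ifs <;> omega

def Fset {k : ℕ} (L : SimpleGraph (Fin k)) (A : Finset ℤ) : Set (Finset ℤ) :=
  {S | S ⊆ A ∧ Nonempty (ZP.induce (↑S : Set ℤ) ≃g L)}

theorem Fset_fin {k : ℕ} (L : SimpleGraph (Fin k)) (A : Finset ℤ) : (Fset L A).Finite :=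
  Set.Finite.subset (Finset.finite_toSet A.powerset) (fun S hS => by simpa using hS.1)

theorem iso_card {k : ℕ} (L : SimpleGraph (Fin k)) (S : Finset ℤ)
    (h : Nonempty (ZP.induce (↑S : Set ℤ) ≃g L)) : S.card = k := by
  obtain ⟨e⟩ := h
  have := Fintype.card_congr e.toEquiv
  simpa using this

theorem move_le {k : ℕ} (L : SimpleGraph (Fin k)) (d p q : ℤ) (A A' : Finset ℤ)
    (hpq : (p = d ∧ q = d + 1) ∨ (p = d + 1 ∧ q = d))
    (hp : p ∉ A) (hq : q ∈ A) (hp' : p ∈ A') (hq' : q ∉ A')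
    (hc : ∀ x, x ≠ d → x ≠ d + 1 → (x ∈ A ↔ x ∈ A'))
    (hw : ∀ x, x ≠ d → x ≠ d + 1 → d - k < x → x < d + 1 + k → x ∈ A) :
    (Fset L A).ncard ≤ (Fset L A').ncard := by
  apply Set.ncard_le_ncard_of_injOn (Tf d) _ _ (Fset_fin L A')
  · rintro S ⟨hSA, hS⟩
    refine ⟨?_, ?_⟩
    · intro x hx
      have hk := iso_card L S hS
      have hJ := Jf_le d S
      have hd := Tf_d d S
      have hpS : p ∉ S := fun h => hp (hSA h)
      by_cases h1 : x = d
      · subst h1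
        rcases hpq with ⟨h, h'⟩ | ⟨h, h'⟩
        · rw [← h]; exact hp'
        · exact absurd (hd.1.1 hx) (h ▸ hpS)
      by_cases h2 : x = d + 1
      · subst h2
        rcases hpq with ⟨h, h'⟩ | ⟨h, h'⟩
        · exact absurd (hd.2.1 hx) (h ▸ hpS)
        · rw [← h]; exact hp'
      rw [← hc x h1 h2]
      rw [mem_Tf] at hx
      unfold sg at hx
      split_ifs at hx with hh
      · exact hw x h1 h2 (by omega) (by omega)
      · exact hSA hx
    · obtain ⟨e⟩ := hS
      exact ⟨(Tf_iso d S).symm.trans e⟩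
  · intro S _ S' _ h
    have := congrArg (Tf d) h
    rwa [Tf_Tf, Tf_Tf] at this

noncomputable def B : ℤ → List ℕ → Finset ℤ
  | _, [] => ∅
  | o, m :: l => Finset.Ico o (o + m) ∪ B (o + m + 1) l

theorem B_cons (o : ℤ) (m : ℕ) (l : List ℕ) :
    B o (m :: l) = Finset.Ico o (o + m) ∪ B (o + m + 1) l := rfl

theorem B_ge (l : List ℕ) : ∀ (o x : ℤ), x ∈ B o l → o ≤ x := by
  induction l with
  | nil => intro o x h; simp [B] at h
  | cons m l ih =>
    intro o x h
    simp only [B, Finset.mem_union, Finset.mem_Ico] at h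
    rcases h with h | h
    · omega
    · have := ih _ _ h; omega

theorem B_card (l : List ℕ) : ∀ (o : ℤ), (B o l).card = l.sum := by
  induction l with
  | nil => intro o; simp [B]
  | cons m l ih =>
    intro o
    rw [B, Finset.card_union_of_disjoint, ih]
    · simp
    · rw [Finset.disjoint_left]
      intro x hx hx'
      have := B_ge _ _ _ hx'
      simp at hx; omega

theorem B_edges (l : List ℕ) (hl : ∀ m ∈ l, 1 ≤ m) :
    ∀ (o : ℤ), ((B o l).filter (fun x => x + 1 ∈ B o l)).card + l.length = l.sum := by
  induction l with
  | nil => intro o; simp [B]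
  | cons m l ih =>
    intro o
    have ih := ih (fun m hm => hl m (List.mem_cons_of_mem _ hm)) (o + m + 1)
    have hm := hl m List.mem_cons_self
    have : (B o (m :: l)).filter (fun x => x + 1 ∈ B o (m :: l)) =
      Finset.Ico o (o + m - 1) ∪
        (B (o+m+1) l).filter (fun x => x + 1 ∈ B (o+m+1) l) := by
      ext x
      have g1 := B_ge l (o+m+1) x
      have g2 := B_ge l (o+m+1) (x+1)
      simp only [B, Finset.mem_filter, Finset.mem_union, Finset.mem_Ico]
      by_cases a1 : x ∈ B (o+m+1) l <;> by_cases a2 : x + 1 ∈ B (o+m+1) l <;>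
        simp only [a1, a2, true_imp_iff, false_imp_iff, true_and, and_true, false_and, and_false,
          or_true, or_false, iff_true, false_or] at g1 g2 ⊢ <;> omega
    rw [this, Finset.card_union_of_disjoint]
    · simp only [Int.card_Ico, List.length_cons, List.sum_cons]
      omega
    · rw [Finset.disjoint_left]
      intro x hx hx'
      have := B_ge _ _ _ (Finset.mem_filter.1 hx').1
      simp at hx; omega

theorem claim1 {k : ℕ} (L : SimpleGraph (Fin k)) (P : Finset ℤ) (o : ℤ) (hP : ∀ x ∈ P, x < o)
    (a b : ℕ) (t : List ℕ) (ha : k - 1 ≤ a) (hb : k - 1 ≤ b) :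
    (Fset L (P ∪ B o ((a+1) :: b :: t))).ncard = (Fset L (P ∪ B o (a :: (b+1) :: t))).ncard := by
  have hP' : ∀ x, o ≤ x → x ∉ P := fun x h h' => absurd (hP x h') (by omega)
  have m1 : ∀ x, x ∈ P ∪ B o ((a+1) :: b :: t) ↔
      (x ∈ P ∨ (o ≤ x ∧ x < o + a + 1) ∨ (o + a + 2 ≤ x ∧ x < o + a + b + 2) ∨
        x ∈ B (o + a + b + 3) t) := by
    intro x
    simp only [B, Finset.mem_union, Finset.mem_Ico]
    push_cast
    rw [show o + ((a:ℤ) + 1) + 1 + b + 1 = o + a + b + 3 by ring,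
      show o + ((a:ℤ) + 1) + 1 + b = o + a + b + 2 by ring,
      show o + ((a:ℤ) + 1) + 1 = o + a + 2 by ring,
      show o + ((a:ℤ) + 1) = o + a + 1 by ring]
  have m2 : ∀ x, x ∈ P ∪ B o (a :: (b+1) :: t) ↔
      (x ∈ P ∨ (o ≤ x ∧ x < o + a) ∨ (o + a + 1 ≤ x ∧ x < o + a + b + 2) ∨
        x ∈ B (o + a + b + 3) t) := by
    intro x
    simp only [B, Finset.mem_union, Finset.mem_Ico]
    push_cast
    rw [show o + (a:ℤ) + 1 + (b + 1) + 1 = o + a + b + 3 by ring,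
      show o + (a:ℤ) + 1 + (b + 1) = o + a + b + 2 by ring]
  have hB : ∀ x, x < o + a + b + 3 → x ∉ B (o + a + b + 3) t :=
    fun x h h' => absurd (B_ge _ _ _ h') (by omega)
  have e1 : o + a ∉ P := hP' _ (by omega)
  have e2 : o + a + 1 ∉ P := hP' _ (by omega)
  have e3 : o + a ∉ B (o + a + b + 3) t := hB _ (by omega)
  have e4 : o + a + 1 ∉ B (o + a + b + 3) t := hB _ (by omega)
  have q1 : o + (a:ℤ) ∈ P ∪ B o ((a+1) :: b :: t) := by
    rw [m1]; right; left; omega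
  have q2 : o + (a:ℤ) + 1 ∉ P ∪ B o ((a+1) :: b :: t) := by
    rw [m1]; simp only [e2, e4, false_or, or_false]; omega
  have q3 : o + (a:ℤ) ∉ P ∪ B o (a :: (b+1) :: t) := by
    rw [m2]; simp only [e1, e3, false_or, or_false]; omega
  have q4 : o + (a:ℤ) + 1 ∈ P ∪ B o (a :: (b+1) :: t) := by
    rw [m2]; right; right; left; omega
  have hc : ∀ x, x ≠ o + (a:ℤ) → x ≠ o + a + 1 →
      (x ∈ P ∪ B o ((a+1) :: b :: t) ↔ x ∈ P ∪ B o (a :: (b+1) :: t)) := by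
    intro x h1 h2
    rw [m1, m2]
    apply or_congr Iff.rfl
    rw [← or_assoc, ← or_assoc]
    apply or_congr _ Iff.rfl
    omega
  have hw : ∀ x, x ≠ o + (a:ℤ) → x ≠ o + a + 1 → o + (a:ℤ) - k < x → x < o + (a:ℤ) + 1 + k →
      x ∈ P ∪ B o ((a+1) :: b :: t) := by
    intro x h1 h2 h3 h4
    rw [m1]
    have : (o ≤ x ∧ x < o + a + 1) ∨ (o + a + 2 ≤ x ∧ x < o + a + b + 2) := by omega
    tauto
  apply le_antisymm
  · exact move_le L (o + a) (o + a + 1) (o + a) _ _ (Or.inr ⟨rfl, rfl⟩) q2 q1 q4 q3 hc hw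
  · exact move_le L (o + a) (o + a) (o + a + 1) _ _ (Or.inl ⟨rfl, rfl⟩) q3 q4 q1 q2
      (fun x h1 h2 => (hc x h1 h2).symm) (fun x h1 h2 h3 h4 => (hc x h1 h2).1 (hw x h1 h2 h3 h4))

theorem claim2 {k : ℕ} (L : SimpleGraph (Fin k)) (P : Finset ℤ) (o : ℤ) (hP : ∀ x ∈ P, x < o)
    (a i : ℕ) (t : List ℕ) (ha : k - 1 ≤ a) : ∀ (b : ℕ) (_ : k - 1 ≤ b),
    (Fset L (P ∪ B o ((a+i) :: b :: t))).ncard = (Fset L (P ∪ B o (a :: (b+i) :: t))).ncard := by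
  induction i with
  | zero => intro b hb; rfl
  | succ i ih =>
    intro b hb
    rw [← add_assoc, claim1 L P o hP (a+i) b t (by omega) hb, ih (b+1) (by omega),
      show b + 1 + i = b + (i + 1) by ring]

theorem main_lists {k : ℕ} (L : SimpleGraph (Fin k)) (n : ℕ) : ∀ (P : Finset ℤ) (o : ℤ)
    (_ : ∀ x ∈ P, x < o) (l l' : List ℕ) (_ : l.length = n) (_ : l'.length = n)
    (_ : l.sum = l'.sum) (_ : ∀ m ∈ l, k - 1 ≤ m) (_ : ∀ m ∈ l', k - 1 ≤ m),
    (Fset L (P ∪ B o l)).ncard = (Fset L (P ∪ B o l')).ncard := by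
  induction n with
  | zero =>
    intro P o hP l l' h h' _ _ _
    rw [List.length_eq_zero_iff] at h h'
    rw [h, h']
  | succ n ih =>
    intro P o hP l l' h h' hs hl hl'
    rcases l with _ | ⟨a, _ | ⟨b, t⟩⟩
    · simp at h
    · rcases l' with _ | ⟨a', _ | ⟨b', t'⟩⟩
      · simp at h'
      · simp at hs; rw [hs]
      · simp only [List.length_cons, List.length_nil] at h h'; omega
    rcases l' with _ | ⟨a', _ | ⟨b', t'⟩⟩
    · simp at h'
    · simp only [List.length_cons, List.length_nil] at h h'; omega
    · skip
      simp only [List.mem_cons, forall_eq_or_imp] at hl hl'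
      obtain ⟨i, rfl⟩ := Nat.exists_eq_add_of_le hl.1
      obtain ⟨i', rfl⟩ := Nat.exists_eq_add_of_le hl'.1
      rw [claim2 L P o hP _ i t le_rfl b hl.2.1, claim2 L P o hP _ i' t' le_rfl b' hl'.2.1]
      rw [B_cons o (k - 1) ((b + i) :: t), B_cons o (k - 1) ((b' + i') :: t'),
        ← Finset.union_assoc, ← Finset.union_assoc]
      apply ih (P ∪ Finset.Ico o (o + (k - 1 : ℕ))) (o + (k - 1 : ℕ) + 1)
      · intro x hx
        rw [Finset.mem_union, Finset.mem_Ico] at hx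
        rcases hx with hx | hx
        · have := hP x hx; omega
        · omega
      · simpa using h
      · simpa using h'
      · simp only [List.sum_cons] at hs ⊢; omega
      · simp only [List.mem_cons, forall_eq_or_imp]
        exact ⟨by omega, hl.2.2⟩
      · simp only [List.mem_cons, forall_eq_or_imp]
        exact ⟨by omega, hl'.2.2⟩

theorem embed_aux {V : Type*} [Fintype V] (G : SimpleGraph V) (hG : IsLinearForest G)
    (cs : List G.ConnectedComponent) : cs.Nodup → ∀ o : ℤ, ∃ φ : V → ℤ,
      (∀ u v, G.connectedComponentMk u ∈ cs → G.connectedComponentMk v ∈ cs →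
        (φ u = φ v → u = v) ∧ (G.Adj u v ↔ ZP.Adj (φ u) (φ v))) ∧
      (∀ x, x ∈ B o (cs.map (fun c => c.supp.ncard)) ↔
        ∃ v, G.connectedComponentMk v ∈ cs ∧ φ v = x) := by
  classical
  induction cs with
  | nil => intro _ o; exact ⟨fun _ => 0, by simp, by simp [B]⟩
  | cons c cs ih =>
    intro hnd o
    rw [List.nodup_cons] at hnd
    obtain ⟨m, ⟨e⟩⟩ := hG c
    have hm : c.supp.ncard = m := by
      rw [← Nat.card_coe_set_eq, Nat.card_congr e.toEquiv]; simp
    obtain ⟨φ, h1, h2⟩ := ih hnd.2 (o + m + 1)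
    have hge : ∀ v, G.connectedComponentMk v ∈ cs → o + m + 1 ≤ φ v :=
      fun v hv => B_ge _ _ _ ((h2 _).2 ⟨v, hv, rfl⟩)
    let ψ : V → ℤ := fun v => if h : v ∈ c.supp then o + ((e ⟨v, h⟩ : Fin m) : ℕ) else φ v
    have hψ1 : ∀ v (h : v ∈ c.supp), ψ v = o + ((e ⟨v, h⟩ : Fin m) : ℕ) :=
      fun v h => dif_pos h
    have hψ2 : ∀ v, v ∉ c.supp → ψ v = φ v := fun v h => dif_neg h
    have hcs : ∀ v, G.connectedComponentMk v ∈ cs → v ∉ c.supp := by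
      intro v hv hvc
      rw [ConnectedComponent.mem_supp_iff] at hvc
      exact hnd.1 (hvc ▸ hv)
    refine ⟨ψ, ?_, ?_⟩
    · intro u v hu hv
      rw [List.mem_cons] at hu hv
      rcases hu with hu | hu <;> rcases hv with hv | hv
      · have hu' : u ∈ c.supp := hu
        have hv' : v ∈ c.supp := hv
        rw [hψ1 u hu', hψ1 v hv', ZP_adj]
        constructor
        · intro h
          have : e ⟨u, hu'⟩ = e ⟨v, hv'⟩ := Fin.ext (by omega)
          simpa using e.injective this
        · have := e.map_adj_iff (v := ⟨u, hu'⟩) (w := ⟨v, hv'⟩)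
          rw [pathGraph_adj] at this
          simp only [comap_adj, Function.Embedding.subtype_apply] at this
          rw [← this]
          omega
      · have hu' : u ∈ c.supp := hu
        rw [hψ1 u hu', hψ2 v (hcs v hv), ZP_adj]
        have := hge v hv
        have hlt := (e ⟨u, hu'⟩).isLt
        refine ⟨fun h => by omega, fun h => ?_, fun h => by omega⟩
        exact absurd ((ConnectedComponent.connectedComponentMk_eq_of_adj h).symm.trans hu)
          (hcs v hv)
      · have hv' : v ∈ c.supp := hv
        rw [hψ1 v hv', hψ2 u (hcs u hu), ZP_adj]
        have := hge u hu
        have hlt := (e ⟨v, hv'⟩).isLt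
        refine ⟨fun h => by omega, fun h => ?_, fun h => by omega⟩
        exact absurd ((ConnectedComponent.connectedComponentMk_eq_of_adj h).trans hv)
          (hcs u hu)
      · rw [hψ2 u (hcs u hu), hψ2 v (hcs v hv)]
        exact h1 u v hu hv
    · intro x
      rw [List.map_cons, B, Finset.mem_union, Finset.mem_Ico, hm, h2]
      constructor
      · rintro (⟨ha, hb⟩ | ⟨v, hv, rfl⟩)
        · let i : Fin m := ⟨(x - o).toNat, by omega⟩
          refine ⟨(e.symm i).1, List.mem_cons.2 (Or.inl (e.symm i).2), ?_⟩
          rw [hψ1 _ (e.symm i).2]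
          simp [i]
          omega
        · exact ⟨v, List.mem_cons_of_mem _ hv, hψ2 v (hcs v hv)⟩
      · rintro ⟨v, hv, rfl⟩
        rcases List.mem_cons.1 hv with hv | hv
        · left
          have hv' : v ∈ c.supp := hv
          rw [hψ1 v hv']
          have hlt := (e ⟨v, hv'⟩).isLt
          omega
        · right
          exact ⟨v, hv, (hψ2 v (hcs v hv)).symm⟩

theorem embed {V : Type*} [Fintype V] (k : ℕ) (L : SimpleGraph (Fin k)) (G : SimpleGraph V)
    (hG : IsLinearForest G) (hk : ∀ c : G.ConnectedComponent, k - 1 ≤ c.supp.ncard) :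
    ∃ l : List ℕ, l.sum = Fintype.card V ∧ G.edgeSet.ncard + l.length = l.sum ∧
      (∀ m ∈ l, k - 1 ≤ m) ∧ copies G L = (Fset L (B 0 l)).ncard := by
  classical
  haveI : Fintype G.ConnectedComponent := Fintype.ofFinite _
  obtain ⟨φ, h1, h2⟩ := embed_aux G hG (Finset.univ : Finset G.ConnectedComponent).toList
    (Finset.nodup_toList _) 0
  simp only [Finset.mem_toList, Finset.mem_univ, true_imp_iff, true_and] at h1 h2
  set l := (Finset.univ : Finset G.ConnectedComponent).toList.map (fun c => c.supp.ncard) with hl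
  have hinj : Function.Injective φ := fun u v h => (h1 u v).1 h
  have hadj : ∀ u v, G.Adj u v ↔ ZP.Adj (φ u) (φ v) := fun u v => (h1 u v).2
  have hpos : ∀ m ∈ l, 1 ≤ m := by
    intro m hm
    rw [hl, List.mem_map] at hm
    obtain ⟨c, _, rfl⟩ := hm
    exact (Set.ncard_pos (Set.toFinite _)).2 c.nonempty_supp
  have hB : B 0 l = Finset.univ.image φ := by
    ext x; rw [h2]; simp
  refine ⟨l, ?_, ?_, ?_, ?_⟩
  · rw [← B_card l 0, hB, Finset.card_image_of_injective _ hinj, Finset.card_univ]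
  · rw [← B_edges l hpos 0]
    congr 1
    rw [← Set.ncard_image_of_injective G.edgeSet (Sym2.map.injective hinj), ← Set.ncard_coe_finset]
    have hi2 : Function.Injective (fun x : ℤ => s(x, x+1)) := by
      intro x y h
      simp only [Sym2.eq_iff] at h
      omega
    rw [← Set.ncard_image_of_injective _ hi2]
    congr 1
    ext z
    simp only [Set.mem_image, Finset.coe_filter, Set.mem_ofPred_eq]
    constructor
    · rintro ⟨y, hy, rfl⟩
      induction y using Sym2.ind with
      | _ u v =>
        rw [mem_edgeSet, hadj, ZP_adj] at hy
        rcases hy with hy | hy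
        · refine ⟨φ u, ⟨(h2 _).2 ⟨u, rfl⟩, (h2 _).2 ⟨v, hy.symm⟩⟩, ?_⟩
          simp [hy]
        · refine ⟨φ v, ⟨(h2 _).2 ⟨v, rfl⟩, (h2 _).2 ⟨u, hy.symm⟩⟩, ?_⟩
          simp [hy, Sym2.eq_swap]
    · rintro ⟨x, ⟨hx, hx'⟩, rfl⟩
      obtain ⟨u, rfl⟩ := (h2 _).1 hx
      obtain ⟨v, hv⟩ := (h2 _).1 hx'
      refine ⟨s(u, v), ?_, ?_⟩
      · rw [mem_edgeSet, hadj, ZP_adj]; omega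
      · simp [hv]
  · intro m hm
    rw [hl, List.mem_map] at hm
    obtain ⟨c, _, rfl⟩ := hm
    exact hk c
  · unfold copies
    have hiso : ∀ s : Finset V, Nonempty (G.induce (↑s : Set V) ≃g
        ZP.induce (↑(s.image φ) : Set ℤ)) := by
      intro s
      refine ⟨⟨(Equiv.Set.image φ (↑s : Set V) hinj).trans
        (Equiv.setCongr (by simp)), ?_⟩⟩
      rintro ⟨u, hu⟩ ⟨v, hv⟩
      simp only [hadj, comap_adj]
      exact Iff.rfl
    have hi : Function.Injective (fun s : Finset V => s.image φ) := Finset.image_injective hinj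
    rw [← Set.ncard_image_of_injective _ hi]
    congr 1
    ext S
    simp only [Set.mem_image, Set.mem_ofPred_eq, Fset]
    constructor
    · rintro ⟨s, ⟨e⟩, rfl⟩
      obtain ⟨f⟩ := hiso s
      exact ⟨by rw [hB]; exact Finset.image_subset_image (Finset.subset_univ _), ⟨f.symm.trans e⟩⟩
    · rintro ⟨hS, ⟨e⟩⟩
      rw [hB, Finset.subset_image_iff] at hS
      obtain ⟨s, _, rfl⟩ := hS
      obtain ⟨f⟩ := hiso s
      exact ⟨s, ⟨f.trans e⟩, rfl⟩

/-- If `L` is a linear forest with `k` vertices, and `G, G'` are linear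
forests with the same number of vertices and edges whose components all have at least
`k-1` vertices, then `s(G,L) = s(G',L)`. -/
theorem stmt_10 {V W : Type*} [Fintype V] [Fintype W] (k : ℕ)
    (L : SimpleGraph (Fin k)) (hL : IsLinearForest L)
    (G : SimpleGraph V) (G' : SimpleGraph W)
    (hGlf : IsLinearForest G) (hG'lf : IsLinearForest G')
    (hcard : Fintype.card V = Fintype.card W)
    (hedges : G.edgeSet.ncard = G'.edgeSet.ncard)
    (hG : ∀ c : G.ConnectedComponent, k - 1 ≤ c.supp.ncard)
    (hG' : ∀ c : G'.ConnectedComponent, k - 1 ≤ c.supp.ncard) :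
    copies G L = copies G' L := by
  obtain ⟨l, a1, a2, a3, a4⟩ := embed k L G hGlf hG
  obtain ⟨l', b1, b2, b3, b4⟩ := embed k L G' hG'lf hG'
  rw [a4, b4]
  have := main_lists L l.length ∅ 0 (by simp) l l' rfl (by omega) (by omega) a3 b3
  simpa using this
end

section
/- Let k ∈ ℕ. If G and G' are linear forests with the same number of vertices and the same number of edges, and every connected component of G and of G' has at least k−1 vertices, then G and G' have the same k-deck. -/
open SimpleGraph

open Classical in
theorem mobius_aux {α β L : Type*} [Fintype α] [Fintype β] [Fintype L] [PartialOrder L]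
    (P : α → L) (Q : β → L)
    (h : ∀ S, Nat.card {a // S ≤ P a} = Nat.card {b // S ≤ Q b}) (S : L) :
    Nat.card {a // P a = S} = Nat.card {b // Q b = S} := by
  induction S using WellFoundedGT.induction with
  | ind S ih =>
  have key : ∀ {γ : Type _} [Fintype γ] (R : γ → L), Nat.card {a // S ≤ R a} =
      Nat.card {a // R a = S} + ∑ T ∈ Finset.univ.filter (fun T => S < T), Nat.card {a // R a = T} := by
    intro γ _ R
    simp only [Nat.card_eq_fintype_card, Fintype.card_subtype]
    rw [Finset.card_eq_sum_card_fiberwise (f := R) (t := Finset.univ.filter (fun T => S ≤ T))]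
    · have : (Finset.univ.filter (fun T => S ≤ T)) = insert S (Finset.univ.filter (fun T => S < T)) := by
        ext T; simp [le_iff_eq_or_lt, eq_comm]
      rw [this, Finset.sum_insert (by simp)]
      congr 1
      · congr 1; ext a; simp; intro h; exact h.ge
      · apply Finset.sum_congr rfl
        intro T hT
        simp at hT
        congr 1; ext a; simp; rintro rfl; exact hT.le
    · intro a; simp
  have key' : ∀ {γ : Type _} [Fintype γ] (R : γ → L), Nat.card {a // S ≤ R a} =
      Nat.card {a // R a = S} + ∑ T ∈ Finset.univ.filter (fun T => S < T), Nat.card {a // R a = T} := by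
    intro γ _ R
    simp only [Nat.card_eq_fintype_card, Fintype.card_subtype]
    rw [Finset.card_eq_sum_card_fiberwise (f := R) (t := Finset.univ.filter (fun T => S ≤ T))]
    · have : (Finset.univ.filter (fun T => S ≤ T)) = insert S (Finset.univ.filter (fun T => S < T)) := by
        ext T; simp [le_iff_eq_or_lt, eq_comm]
      rw [this, Finset.sum_insert (by simp)]
      congr 1
      · congr 1; ext a; simp; intro h; exact h.ge
      · apply Finset.sum_congr rfl
        intro T hT
        simp at hT
        congr 1; ext a; simp; rintro rfl; exact hT.le
    · intro a; simp
  have h1 := key P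
  have h2 := key' Q
  rw [h S, h2, Finset.sum_congr rfl (fun T hT => ih T (by simpa using hT))] at h1
  omega

def SatC {ι V : Type*} (A B : ι → ι → Prop) (G : SimpleGraph V) (f : ι → V) : Prop :=
  (∀ i j, A i j → G.Adj (f i) (f j)) ∧ (∀ i j, B i j → f i = f j)

def PC {ι : Type*} (A B : ι → ι → Prop) (f : ι → ℕ) : Prop :=
  (∀ i j, A i j → (f i + 1 = f j ∨ f j + 1 = f i)) ∧ (∀ i j, B i j → f i = f j)

def conG {ι : Type*} (A B : ι → ι → Prop) : SimpleGraph ι :=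
  SimpleGraph.fromRel (fun i j => A i j ∨ B i j)

theorem conG_reach {ι : Type*} {A B : ι → ι → Prop} {i j : ι} (h : A i j ∨ B i j) :
    (conG A B).connectedComponentMk i = (conG A B).connectedComponentMk j := by
  by_cases hij : i = j
  · rw [hij]
  · exact ConnectedComponent.sound (Adj.reachable (by simp only [conG, fromRel_adj]; tauto))

theorem card_prod_comp {ι V : Type*} [Fintype ι] [Fintype V] (A B : ι → ι → Prop)
    (G : SimpleGraph V) [Fintype (conG A B).ConnectedComponent] :
    Nat.card {f : ι → V // SatC A B G f} = ∏ c : (conG A B).ConnectedComponent,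
      Nat.card {g : c.supp → V // SatC (fun i j : c.supp => A i j) (fun i j : c.supp => B i j) G g} := by
  rw [← Nat.card_pi]
  have key : ∀ (g : (c : (conG A B).ConnectedComponent) → c.supp → V) (i : ι) (c : _)
    (h : (conG A B).connectedComponentMk i = c), g _ ⟨i, rfl⟩ = g c ⟨i, h⟩ := by
    intro g i c h; subst h; rfl
  refine Nat.card_congr
    { toFun := fun f c => ⟨fun i => f.1 i, fun i j h => f.2.1 _ _ h, fun i j h => f.2.2 _ _ h⟩
      invFun := fun g => ⟨fun i => (g ((conG A B).connectedComponentMk i)).1 ⟨i, rfl⟩, ?_, ?_⟩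
      left_inv := fun f => rfl
      right_inv := ?_ }
  · intro i j h
    have h' := conG_reach (A := A) (B := B) (Or.inl h)
    have := key (fun c => (g c).1) i _ h'
    beta_reduce at this ⊢
    rw [this]
    exact (g _).2.1 _ _ h
  · intro i j h
    have h' := conG_reach (A := A) (B := B) (Or.inr h)
    have := key (fun c => (g c).1) i _ h'
    beta_reduce at this ⊢
    rw [this]
    exact (g _).2.2 _ _ h
  · intro g
    funext c
    apply Subtype.ext
    funext i
    exact key (fun c => (g c).1) i c i.2

theorem conG_connected_comp {ι : Type*} (A B : ι → ι → Prop) (c : (conG A B).ConnectedComponent) :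
    (conG (fun i j : c.supp => A i j) (fun i j : c.supp => B i j)).Connected := by
  have : (conG (fun i j : c.supp => A i j) (fun i j : c.supp => B i j)) =
      (conG A B).induce c.supp := by
    ext i j
    change _ ↔ (conG A B).Adj i.1 j.1
    refine (fromRel_adj _ i j).trans (Iff.trans ?_ (fromRel_adj _ i.1 j.1).symm)
    rw [ne_eq, ne_eq, Subtype.ext_iff]
  rw [this]
  exact c.connected_toSimpleGraph

theorem PC_range {ι : Type*} [Fintype ι] {A B : ι → ι → Prop} (hc : (conG A B).Connected)
    {f : ι → ℕ} (hf : PC A B f) (i j : ι) : f i + 1 ≤ f j + Fintype.card ι := by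
  classical
  obtain ⟨p, hp⟩ := hc.preconnected.exists_isPath i j
  have h1 := hp.length_lt
  have h2 : ∀ {i j : ι} (p : (conG A B).Walk i j), f i ≤ f j + p.length := by
    intro i j p
    induction p with
    | nil => simp
    | cons h p ih =>
      rw [Walk.length_cons]
      simp only [conG, fromRel_adj] at h
      rcases h.2 with (h | h) | (h | h)
      · have := hf.1 _ _ h; omega
      · have := hf.2 _ _ h; omega
      · have := hf.1 _ _ h; omega
      · have := hf.2 _ _ h; omega
  have := h2 p
  omega

noncomputable def DC {ι : Type*} (A B : ι → ι → Prop) (m : ℕ) : ℕ :=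
  Set.ncard {f : ι → ℕ | (∀ i, f i < m) ∧ PC A B f}

noncomputable def EC {ι : Type*} (A B : ι → ι → Prop) (m : ℕ) : ℕ :=
  Set.ncard {f : ι → ℕ | (∀ i, f i < m + 1) ∧ PC A B f ∧ ∃ i, f i = m}

theorem fin_lt {ι : Type*} [Fintype ι] (m : ℕ) : {f : ι → ℕ | ∀ i, f i < m}.Finite := by
  have := Set.Finite.pi' (fun _ : ι => Set.finite_Iio m)
  simpa using this

theorem DC_succ {ι : Type*} [Fintype ι] (A B : ι → ι → Prop) (m : ℕ) :
    DC A B (m+1) = DC A B m + EC A B m := by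
  unfold DC EC
  rw [← Set.ncard_union_eq ?_ ((fin_lt m).subset fun f h => h.1)
    ((fin_lt (m+1)).subset fun f h => h.1)]
  · congr 1
    ext f
    simp only [Set.mem_ofPred_eq, Set.mem_union]
    constructor
    · rintro ⟨h1, h2⟩
      by_cases h : ∃ i, f i = m
      · exact Or.inr ⟨h1, h2, h⟩
      · push Not at h
        exact Or.inl ⟨fun i => by have := h i; have := h1 i; omega, h2⟩
    · rintro (⟨h1, h2⟩ | ⟨h1, h2, h3⟩)
      · exact ⟨fun i => by have := h1 i; omega, h2⟩
      · exact ⟨h1, h2⟩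
  · rw [Set.disjoint_left]
    rintro f ⟨h1, -⟩ ⟨-, -, i, hi⟩
    have := h1 i; omega

theorem EC_succ {ι : Type*} [Fintype ι] (A B : ι → ι → Prop) (hc : (conG A B).Connected) (m : ℕ)
    (hm : Fintype.card ι ≤ m + 1) :
    EC A B (m+1) = EC A B m := by
  symm
  unfold EC
  refine Set.ncard_congr (fun f _ => fun i => f i + 1) ?_ ?_ ?_
  · rintro f ⟨h1, h2, i, hi⟩
    refine ⟨fun i => by have := h1 i; beta_reduce; omega, ⟨fun i j h => ?_, fun i j h => ?_⟩, i, by beta_reduce; omega⟩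
    · have := h2.1 i j h; beta_reduce; omega
    · have := h2.2 i j h; beta_reduce; omega
  · intro f g _ _ h
    funext i
    have := congrFun h i
    beta_reduce at this
    omega
  · rintro f ⟨h1, h2, i, hi⟩
    have hp : ∀ j, 1 ≤ f j := by
      intro j
      have := PC_range hc h2 i j
      omega
    refine ⟨fun i => f i - 1, ⟨fun i => ?_, ⟨fun i j h => ?_, fun i j h => ?_⟩, i, by beta_reduce; omega⟩, ?_⟩
    · have := h1 i; have := hp i; beta_reduce; omega
    · have := h2.1 i j h; have := hp i; have := hp j; beta_reduce; omega
    · have := h2.2 i j h; beta_reduce; omega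
    · funext i; have := hp i; beta_reduce; omega

theorem DC_affine {ι : Type*} [Fintype ι] (A B : ι → ι → Prop) (hc : (conG A B).Connected) (m : ℕ)
    (hm : Fintype.card ι ≤ m + 1) (t : ℕ) : DC A B (m + t) = DC A B m + t * EC A B m := by
  have hE : ∀ t, EC A B (m + t) = EC A B m := by
    intro t
    induction t with
    | zero => rfl
    | succ t ih => rw [← add_assoc, EC_succ A B hc _ (by omega), ih]
  induction t with
  | zero => simp
  | succ t ih => rw [← add_assoc, DC_succ, ih, hE]; ring

theorem card_path {ι : Type*} (A B : ι → ι → Prop) (m : ℕ) :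
    Nat.card {f : ι → Fin m // SatC A B (pathGraph m) f} = DC A B m := by
  unfold DC
  rw [← Nat.card_coe_set_eq]
  refine Nat.card_congr
    { toFun := fun f => ⟨fun i => (f.1 i).val, fun i => (f.1 i).2,
        fun i j h => ?_, fun i j h => ?_⟩
      invFun := fun f => ⟨fun i => ⟨f.1 i, f.2.1 i⟩, fun i j h => ?_, fun i j h => ?_⟩
      left_inv := fun f => rfl
      right_inv := fun f => rfl }
  · exact pathGraph_adj.1 (f.2.1 i j h)
  · exact congrArg Fin.val (f.2.2 i j h)
  · exact pathGraph_adj.2 (f.2.2.1 i j h)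
  · exact Fin.ext (f.2.2.2 i j h)

theorem card_iso {ι V W : Type*} (A B : ι → ι → Prop) {G : SimpleGraph V} {G' : SimpleGraph W}
    (e : G ≃g G') :
    Nat.card {f : ι → V // SatC A B G f} = Nat.card {f : ι → W // SatC A B G' f} := by
  refine Nat.card_congr (Equiv.subtypeEquiv (Equiv.arrowCongr (Equiv.refl _) e.toEquiv) ?_)
  intro f
  simp [SatC, Iso.map_adj_iff]

theorem card_comp {ι V : Type*} [Fintype ι] [Fintype V] (A B : ι → ι → Prop)
    (hc : (conG A B).Connected)
    (G : SimpleGraph V) [Fintype G.ConnectedComponent] :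
    Nat.card {f : ι → V // SatC A B G f} = ∑ c : G.ConnectedComponent,
      Nat.card {g : ι → c.supp // SatC A B (G.induce c.supp) g} := by
  obtain ⟨r⟩ := hc.nonempty
  rw [← Nat.card_congr (Equiv.sigmaFiberEquiv
    (fun f : {f : ι → V // SatC A B G f} => G.connectedComponentMk (f.1 r))), Nat.card_sigma]
  refine Finset.sum_congr rfl fun c _ => ?_
  have key : ∀ (f : ι → V), SatC A B G f → ∀ i j, G.connectedComponentMk (f i) = G.connectedComponentMk (f j) := by
    intro f hf i j
    obtain ⟨p⟩ := hc.preconnected i j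
    induction p with
    | nil => rfl
    | cons h p ih =>
      rw [← ih]
      simp only [conG, fromRel_adj] at h
      rcases h.2 with (h | h) | (h | h)
      · exact ConnectedComponent.sound (hf.1 _ _ h).reachable
      · rw [hf.2 _ _ h]
      · exact ConnectedComponent.sound (hf.1 _ _ h).reachable.symm
      · rw [hf.2 _ _ h]
  refine Nat.card_congr
    { toFun := fun f => ⟨fun i => ⟨f.1.1 i, (key _ f.1.2 i r).trans f.2⟩,
        fun i j h => f.1.2.1 i j h, fun i j h => Subtype.ext (f.1.2.2 i j h)⟩
      invFun := fun g => ⟨⟨fun i => (g.1 i).1, fun i j h => g.2.1 i j h,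
        fun i j h => congrArg Subtype.val (g.2.2 i j h)⟩, (g.1 r).2⟩
      left_inv := fun f => rfl
      right_inv := fun f => rfl }

theorem card_conn {ι V : Type*} [Fintype ι] [Fintype V] (A B : ι → ι → Prop)
    (hc : (conG A B).Connected) (G : SimpleGraph V) (hl : IsLinearForest G) (k : ℕ)
    (hk : Fintype.card ι ≤ k) (hG : ∀ c : G.ConnectedComponent, k - 1 ≤ c.supp.ncard) :
    (Nat.card {f : ι → V // SatC A B G f} : ℤ) =
      Nat.card G.ConnectedComponent * (DC A B (k-1) - (k-1 : ℕ) * EC A B (k-1)) + Fintype.card V * EC A B (k-1) := by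
  classical
  have := Fintype.ofFinite G.ConnectedComponent
  have h1 : ∀ c : G.ConnectedComponent,
      (Nat.card {g : ι → c.supp // SatC A B (G.induce c.supp) g} : ℤ) =
      (DC A B (k-1) - (k-1 : ℕ) * EC A B (k-1)) + Nat.card c.supp * EC A B (k-1) := by
    intro c
    obtain ⟨m, ⟨e⟩⟩ := hl c
    have hm : Nat.card c.supp = m := by
      rw [Nat.card_congr e.toEquiv]; simp
    have h2 : k - 1 ≤ m := by
      rw [← hm]; exact (hG c).trans_eq (Nat.card_coe_set_eq _).symm
    rw [card_iso A B e, card_path, hm]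
    obtain ⟨t, rfl⟩ := Nat.exists_eq_add_of_le h2
    rw [DC_affine A B hc (k-1) (by omega)]
    push_cast
    ring
  have h3 : Fintype.card V = ∑ c : G.ConnectedComponent, Nat.card c.supp := by
    rw [← Nat.card_eq_fintype_card, ← Nat.card_congr (Equiv.sigmaFiberEquiv G.connectedComponentMk), Nat.card_sigma]
    rfl
  rw [card_comp A B hc, h3]
  push_cast
  rw [Finset.sum_congr rfl (fun c _ => h1 c), Finset.sum_add_distrib, Finset.sum_mul]
  simp [Nat.card_eq_fintype_card]
  ring

theorem card_sat_eq {ι V W : Type*} [Fintype ι] [Fintype V] [Fintype W] (k : ℕ)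
    (A B : ι → ι → Prop) (hk : Fintype.card ι ≤ k)
    (G : SimpleGraph V) (G' : SimpleGraph W)
    (hGlf : IsLinearForest G) (hG'lf : IsLinearForest G')
    (hcard : Fintype.card V = Fintype.card W)
    (hcc : Nat.card G.ConnectedComponent = Nat.card G'.ConnectedComponent)
    (hG : ∀ c : G.ConnectedComponent, k - 1 ≤ c.supp.ncard)
    (hG' : ∀ c : G'.ConnectedComponent, k - 1 ≤ c.supp.ncard) :
    Nat.card {f : ι → V // SatC A B G f} = Nat.card {f : ι → W // SatC A B G' f} := by
  classical
  have := Fintype.ofFinite (conG A B).ConnectedComponent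
  rw [card_prod_comp, card_prod_comp]
  refine Finset.prod_congr rfl fun c _ => ?_
  have hc := conG_connected_comp A B c
  have hk' : Fintype.card c.supp ≤ k := (Fintype.card_subtype_le _).trans hk
  have h1 := card_conn _ _ hc G hGlf k hk' hG
  have h2 := card_conn _ _ hc G' hG'lf k hk' hG'
  rw [hcc, hcard, ← h2] at h1
  exact_mod_cast h1

theorem card_emb {V : Type*} [Fintype V] (G : SimpleGraph V) (k : ℕ) (H : SimpleGraph (Fin k)) :
    Nat.card {f : Fin k → V // ((fun i j => G.Adj (f i) (f j)), (fun i j => f i = f j)) =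
      ((fun i j => H.Adj i j), (fun i j => i = j))} =
    Set.ncard {s : Finset V | s.card = k ∧ Nonempty ((G.induce (↑s : Set V)) ≃g H)} *
      Nat.card (H ≃g H) := by
  classical
  set T := {s : Finset V | s.card = k ∧ Nonempty ((G.induce (↑s : Set V)) ≃g H)} with hT
  have e1 : {f : Fin k → V // ((fun i j => G.Adj (f i) (f j)), (fun i j => f i = f j)) =
      ((fun i j => H.Adj i j), (fun i j => i = j))} ≃ (H ↪g G) :=
    { toFun := fun f => ⟨⟨f.1, fun i j h => by
          have := congrFun (congrFun (congrArg Prod.snd f.2) i) j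
          simpa [h] using this⟩, fun {i j} => by
          have := congrFun (congrFun (congrArg Prod.fst f.2) i) j
          exact Eq.to_iff this⟩
      invFun := fun f => ⟨f, by
        refine Prod.ext ?_ ?_
        · funext i j; exact propext f.map_adj_iff
        · funext i j; exact propext f.injective.eq_iff⟩
      left_inv := fun f => rfl
      right_inv := fun f => rfl }
  have hmem : ∀ f : H ↪g G, Finset.univ.image f ∈ T := by
    intro f
    refine ⟨by rw [Finset.card_image_of_injective _ f.injective]; simp, ⟨RelIso.symm ?_⟩⟩
    refine ⟨Equiv.ofBijective (fun i => ⟨f i, by simp⟩) ⟨fun i j h => ?_, ?_⟩, ?_⟩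
    · exact f.injective (congrArg Subtype.val h)
    · rintro ⟨x, hx⟩
      simp at hx
      obtain ⟨i, rfl⟩ := hx
      exact ⟨i, rfl⟩
    · intro i j
      exact f.map_adj_iff
  have := Fintype.ofFinite T
  rw [Nat.card_congr e1, ← Nat.card_congr (Equiv.sigmaFiberEquiv
    (fun f : H ↪g G => (⟨_, hmem f⟩ : T)))]
  have : Finite (H ↪g G) := Finite.of_injective (fun e => (e : Fin k → V)) DFunLike.coe_injective
  rw [Nat.card_sigma, Finset.sum_congr rfl (g := fun _ => Nat.card (H ≃g H)), Finset.sum_const,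
    smul_eq_mul, Finset.card_univ, ← Nat.card_eq_fintype_card, Nat.card_coe_set_eq]
  rintro ⟨s, hs, ⟨e⟩⟩ -
  have himg : ∀ g : H ≃g H, Finset.univ.image (fun i => (e.symm (g i)).1) = s := by
    intro g
    ext x
    simp only [Finset.mem_image, Finset.mem_univ, true_and]
    constructor
    · rintro ⟨i, rfl⟩; exact (e.symm (g i)).2
    · intro hx
      exact ⟨g.symm (e ⟨x, hx⟩), by simp⟩
  symm
  refine Nat.card_congr (Equiv.ofBijective (fun g =>
    ⟨(Embedding.induce (G := G) (s : Set V)).comp (RelIso.trans g e.symm).toRelEmbedding, ?_⟩) ⟨?_, ?_⟩)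
  · exact Subtype.ext (himg g)
  · intro g g' h
    ext i
    have := congrArg (fun f => f.1 i) h
    have := e.symm.injective (Subtype.ext this)
    simpa using congrArg Fin.val this
  · rintro ⟨f, hf⟩
    have hf' : Finset.univ.image f = s := congrArg Subtype.val hf
    have hfs : ∀ i, f i ∈ (s : Set V) := fun i => by rw [← hf']; simp
    have hinj : Function.Injective (fun i => e ⟨f i, hfs i⟩) := fun i j h => by
      have := e.injective h
      exact f.injective (congrArg Subtype.val this)
    refine ⟨⟨Equiv.ofBijective (fun i => e ⟨f i, hfs i⟩) (Finite.injective_iff_bijective.1 hinj), ?_⟩, ?_⟩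
    · intro i j
      exact e.map_adj_iff.trans f.map_adj_iff
    · apply Subtype.ext
      apply DFunLike.ext
      intro i
      change (e.symm (e ⟨f i, hfs i⟩)).1 = f i
      simp

theorem card_cc {V : Type*} [Fintype V] (G : SimpleGraph V) (hl : IsLinearForest G) :
    Nat.card G.ConnectedComponent + G.edgeSet.ncard = Fintype.card V := by
  classical
  let A : Fin 2 → Fin 2 → Prop := fun i j => i = 0 ∧ j = 1
  let B : Fin 2 → Fin 2 → Prop := fun _ _ => False
  have hc : (conG A B).Connected := by
    have h01 : (conG A B).Adj 0 1 := by simp [conG, A, B]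
    refine ⟨fun i j => ?_⟩
    fin_cases i <;> fin_cases j
    · rfl
    · exact h01.reachable
    · exact h01.symm.reachable
    · rfl
  have h := card_conn A B hc G hl 2 (by simp) (fun c => by
    have := c.nonempty_supp
    exact (Set.ncard_pos (Set.toFinite _)).2 this)
  have hD : DC A B 1 = 0 := by
    unfold DC
    rw [Set.ncard_eq_zero ((fin_lt 1).subset fun f h => h.1)]
    rw [Set.eq_empty_iff_forall_notMem]
    rintro f ⟨h1, h2, -⟩
    have := h2 0 1 ⟨rfl, rfl⟩
    have := h1 0
    have := h1 1
    omega
  have hE : EC A B 1 = 2 := by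
    unfold EC
    have : {f : Fin 2 → ℕ | (∀ i, f i < 1 + 1) ∧ PC A B f ∧ ∃ i, f i = 1} = {![0,1], ![1,0]} := by
      ext f
      simp only [Set.mem_ofPred_eq, Set.mem_insert_iff, Set.mem_singleton_iff]
      constructor
      · rintro ⟨h1, ⟨h2, -⟩, -⟩
        have := h2 0 1 ⟨rfl, rfl⟩
        have := h1 0
        have := h1 1
        have : (f 0 = 0 ∧ f 1 = 1) ∨ (f 0 = 1 ∧ f 1 = 0) := by omega
        rcases this with h | h
        · left; funext i; fin_cases i <;> simp [h]
        · right; funext i; fin_cases i <;> simp [h]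
      · rintro (rfl | rfl) <;> simp [PC, A, B, Fin.forall_fin_two]
    rw [this, Set.ncard_pair]
    intro h
    simpa using congrFun h 0
  have hdart : Nat.card {f : Fin 2 → V // SatC A B G f} = 2 * G.edgeSet.ncard := by
    have : G.edgeSet.ncard = G.edgeFinset.card := by
      rw [← coe_edgeFinset, Set.ncard_coe_finset]
    rw [this, ← dart_card_eq_twice_card_edges, ← Nat.card_eq_fintype_card]
    refine Nat.card_congr
      { toFun := fun f => ⟨(f.1 0, f.1 1), f.2.1 0 1 ⟨rfl, rfl⟩⟩
        invFun := fun d => ⟨![d.fst, d.snd], ?_, ?_⟩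
        left_inv := ?_
        right_inv := fun d => rfl }
    · rintro i j ⟨rfl, rfl⟩
      exact d.adj
    · rintro i j ⟨⟩
    · intro f
      apply Subtype.ext
      funext i
      fin_cases i <;> rfl
  rw [hdart] at h
  norm_num [hD, hE] at h
  simp only [Nat.card_eq_fintype_card] at h ⊢
  omega

/-- Linear forests with the same number of vertices and edges whose
components all have at least `k-1` vertices have the same `k`-deck. -/
theorem stmt_11 {V W : Type*} [Fintype V] [Fintype W] (k : ℕ)
    (G : SimpleGraph V) (G' : SimpleGraph W)
    (hGlf : IsLinearForest G) (hG'lf : IsLinearForest G')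
    (hcard : Fintype.card V = Fintype.card W)
    (hedges : G.edgeSet.ncard = G'.edgeSet.ncard)
    (hG : ∀ c : G.ConnectedComponent, k - 1 ≤ c.supp.ncard)
    (hG' : ∀ c : G'.ConnectedComponent, k - 1 ≤ c.supp.ncard) :
    SameDeck G G' k := by
  classical
  intro H
  have hcc : Nat.card G.ConnectedComponent = Nat.card G'.ConnectedComponent := by
    have := card_cc G hGlf
    have := card_cc G' hG'lf
    omega
  have h := mobius_aux (L := (Fin k → Fin k → Prop) × (Fin k → Fin k → Prop))
    (fun f : Fin k → V => ((fun i j => G.Adj (f i) (f j)), (fun i j => f i = f j)))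
    (fun f : Fin k → W => ((fun i j => G'.Adj (f i) (f j)), (fun i j => f i = f j)))
    (fun S => card_sat_eq k S.1 S.2 (by simp) G G' hGlf hG'lf hcard hcc hG hG')
    ((fun i j => H.Adj i j), (fun i j => i = j))
  rw [card_emb, card_emb] at h
  have : Finite (H ≃g H) := Finite.of_injective (fun e => (e : Fin k → Fin k)) DFunLike.coe_injective
  have : Nonempty (H ≃g H) := ⟨RelIso.refl _⟩
  exact Nat.eq_of_mul_eq_mul_right Nat.card_pos h
end

section
/- Let L be a linear forest with k vertices, and let q, r be natural numbers with q ≥ k+1, q ≥ 3, and r ≥ k−1. Then s(P_{q+r}, L) = s(C_q + P_r, L). -/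
open SimpleGraph

namespace S12

theorem copies_congr {V V' W : Type*} [Fintype V] [Fintype V']
    (G : SimpleGraph V) (G' : SimpleGraph V') (e : V ≃ V')
    (he : ∀ u v, G'.Adj (e u) (e v) ↔ G.Adj u v) (L : SimpleGraph W) :
    copies G L = copies G' L := by
  unfold copies
  have key : ∀ s : Finset V, Nonempty ((G.induce (↑s : Set V)) ≃g
      (G'.induce (↑(s.map e.toEmbedding) : Set V'))) := by
    intro s
    refine ⟨⟨e.subtypeEquiv (by intro a; simp), ?_⟩⟩
    rintro ⟨a, ha⟩ ⟨b, hb⟩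
    simp [he]
  refine Set.ncard_congr (fun s _ => s.map e.toEmbedding) ?_ ?_ ?_
  · rintro s ⟨hs⟩
    obtain ⟨f⟩ := key s
    exact ⟨f.symm.trans hs⟩
  · intro a b _ _ h
    exact Finset.map_injective _ h
  · rintro b ⟨hb⟩
    have hbb : (b.map e.symm.toEmbedding).map e.toEmbedding = b := by
      ext x; simp
    refine ⟨b.map e.symm.toEmbedding, ?_, hbb⟩
    obtain ⟨f⟩ := key (b.map e.symm.toEmbedding)
    rw [hbb] at f
    exact ⟨f.trans hb⟩

/-- swap of the first columns -/
def sw (q r t : ℕ) : Fin q ⊕ Fin r → Fin q ⊕ Fin r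
  | .inl i => if h : i.1 < t ∧ i.1 < r then .inr ⟨i.1, h.2⟩ else .inl i
  | .inr i => if h : i.1 < t ∧ i.1 < q then .inl ⟨i.1, h.2⟩ else .inr i

theorem sw_sw (q r t : ℕ) (v) : sw q r t (sw q r t v) = v := by
  rcases v with ⟨i, hi⟩ | ⟨i, hi⟩
  · by_cases h : i < t ∧ i < r
    · simp [sw, h, hi]
    · simp [sw, h]
  · by_cases h : i < t ∧ i < q
    · simp [sw, h, hi]
    · simp [sw, h]

def swE (q r t : ℕ) : (Fin q ⊕ Fin r) ≃ (Fin q ⊕ Fin r) :=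
  ⟨sw q r t, sw q r t, sw_sw q r t, sw_sw q r t⟩

def X {q r : ℕ} (S : Finset (Fin q ⊕ Fin r)) (t : ℕ) : Prop := ∃ h : t < q, .inl ⟨t, h⟩ ∈ S
def Y {q r : ℕ} (S : Finset (Fin q ⊕ Fin r)) (t : ℕ) : Prop := ∃ h : t < r, .inr ⟨t, h⟩ ∈ S

def R {q r : ℕ} (S : Finset (Fin q ⊕ Fin r)) (t : ℕ) : Prop :=
  (¬ X S (q - 1) ∧ t = 0) ∨
  (X S (q - 1) ∧ t ≤ r ∧ t < q - 1 ∧ ¬ X S t ∧ ¬ Y S t ∧ ∀ s < t, X S s ∨ Y S s)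

theorem R_unique {q r : ℕ} (S : Finset (Fin q ⊕ Fin r)) (t t' : ℕ) (h : R S t) (h' : R S t') :
    t = t' := by
  rcases h with ⟨h1, h2⟩ | ⟨h1, h2, h3, h4, h5, h6⟩ <;>
  rcases h' with ⟨g1, g2⟩ | ⟨g1, g2, g3, g4, g5, g6⟩
  · omega
  · exact absurd g1 h1
  · exact absurd h1 g1
  · rcases lt_trichotomy t t' with h | h | h
    · have := g6 t h; tauto
    · exact h
    · have := h6 t' h; tauto

def col {q r : ℕ} : Fin q ⊕ Fin r → ℕ
  | .inl i => i.1
  | .inr i => i.1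

theorem R_exists {q r : ℕ} (S : Finset (Fin q ⊕ Fin r)) (hq : S.card + 1 ≤ q)
    (hr : S.card ≤ r + 1) : ∃ t, R S t := by
  classical
  by_cases hX : X S (q - 1)
  swap
  · exact ⟨0, Or.inl ⟨hX, rfl⟩⟩
  by_cases hE : ∃ t, t ≤ r ∧ t < q - 1 ∧ ¬ X S t ∧ ¬ Y S t
  · refine ⟨Nat.find hE, Or.inr ⟨hX, ?_⟩⟩
    obtain ⟨h1, h2, h3, h4⟩ := Nat.find_spec hE
    refine ⟨h1, h2, h3, h4, fun s hs => ?_⟩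
    have := Nat.find_min hE hs
    by_contra hc
    push Not at hc
    exact this ⟨by omega, by omega, hc.1, hc.2⟩
  · exfalso
    push Not at hE
    have hcol : ∀ t, (X S t ∨ Y S t) → t ∈ S.image col := by
      rintro t (⟨h, h'⟩ | ⟨h, h'⟩)
      · exact Finset.mem_image.2 ⟨_, h', rfl⟩
      · exact Finset.mem_image.2 ⟨_, h', rfl⟩
    have hsub : insert (q - 1) (Finset.range (min (q - 1) (r + 1))) ⊆ S.image col := by
      intro t ht
      rw [Finset.mem_insert, Finset.mem_range] at ht
      apply hcol
      rcases ht with rfl | ht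
      · exact Or.inl hX
      · have := hE t (by omega) (by omega)
        tauto
    have h1 := Finset.card_le_card hsub
    rw [Finset.card_insert_of_notMem (by simp), Finset.card_range] at h1
    have h2 : (S.image col).card ≤ S.card := Finset.card_image_le
    omega

theorem mem_swE {q r : ℕ} (S : Finset (Fin q ⊕ Fin r)) (t : ℕ) (v) :
    v ∈ S.map (swE q r t).toEmbedding ↔ sw q r t v ∈ S := by
  rw [Finset.mem_map_equiv]; rfl

theorem X_sw {q r : ℕ} (S : Finset (Fin q ⊕ Fin r)) (t s : ℕ) (htr : t ≤ r) (htq : t < q) :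
    X (S.map (swE q r t).toEmbedding) s ↔ if s < t then Y S s else X S s := by
  unfold X Y
  split_ifs with h
  · have h1 : s < r := by omega
    have h2 : s < q := by omega
    simp only [mem_swE, sw]; simp [h, h1, h2]
  · simp only [mem_swE, sw]; simp [h]

theorem Y_sw {q r : ℕ} (S : Finset (Fin q ⊕ Fin r)) (t s : ℕ) (htr : t ≤ r) (htq : t < q) :
    Y (S.map (swE q r t).toEmbedding) s ↔ if s < t then X S s else Y S s := by
  unfold X Y
  split_ifs with h
  · have h1 : s < r := by omega
    have h2 : s < q := by omega
    simp only [mem_swE, sw]; simp [h, h1, h2]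
  · simp only [mem_swE, sw]; simp [h]

theorem R_sw {q r : ℕ} (S : Finset (Fin q ⊕ Fin r)) (t : ℕ) (hq : 3 ≤ q) (h : R S t) :
    R (S.map (swE q r t).toEmbedding) t := by
  rcases h with ⟨h1, h2⟩ | ⟨h1, h2, h3, h4, h5, h6⟩
  · left
    subst h2
    rw [X_sw _ _ _ (by omega) (by omega)]
    simpa using h1
  · right
    simp only [X_sw _ _ _ h2 (show t < q by omega), Y_sw _ _ _ h2 (show t < q by omega)]
    refine ⟨?_, h2, h3, ?_, ?_, ?_⟩
    · rwa [if_neg (by omega)]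
    · simpa using h4
    · simpa using h5
    · intro s hs
      simpa [hs] using (h6 s hs).symm

/-- the path graph on the sum type -/
def A (q r : ℕ) : SimpleGraph (Fin q ⊕ Fin r) :=
  (pathGraph (q + r)).comap finSumFinEquiv

theorem cyc_adj {q : ℕ} (hq : 3 ≤ q) (u v : Fin q) : (cycleGraph q).Adj u v ↔
    (u.1 + 1 = v.1 ∨ v.1 + 1 = u.1 ∨ (u.1 = 0 ∧ v.1 + 1 = q) ∨ (v.1 = 0 ∧ u.1 + 1 = q)) := by
  rw [cycleGraph_adj']
  rcases u with ⟨u, hu⟩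
  rcases v with ⟨v, hv⟩
  simp only [Fin.sub_def]
  have key : ∀ a b : ℕ, a < q → b < q →
      (q - b + a) % q = if b ≤ a then a - b else q - b + a := by
    intro a b ha hb
    split_ifs with h
    · rw [show q - b + a = (a - b) + q by omega, Nat.add_mod_right, Nat.mod_eq_of_lt (by omega)]
    · exact Nat.mod_eq_of_lt (by omega)
  rw [key _ _ hu hv, key _ _ hv hu]
  split_ifs <;> omega

theorem adj_sw {q r : ℕ} (hq : 3 ≤ q) (S : Finset (Fin q ⊕ Fin r)) (t : ℕ) (h : R S t) (u v)
    (hu : u ∈ S) (hv : v ∈ S) :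
    (A q r).Adj (sw q r t u) (sw q r t v) ↔ (cycleGraph q ⊕g pathGraph r).Adj u v := by
  have hl : ∀ i : Fin q, Sum.inl i ∈ S →
      (¬ X S (q - 1) ∧ t = 0 ∧ i.1 ≠ q - 1) ∨ (X S (q - 1) ∧ t ≤ r ∧ t < q - 1 ∧ i.1 ≠ t) := by
    intro i hi
    rcases h with ⟨h1, h2⟩ | ⟨h1, h2, h3, h4, h5, h6⟩
    · exact Or.inl ⟨h1, h2, fun hc => h1 ⟨by omega, by simpa [← hc] using hi⟩⟩
    · exact Or.inr ⟨h1, h2, h3, fun hc => h4 ⟨by omega, by simpa [← hc] using hi⟩⟩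
  have hr : ∀ i : Fin r, Sum.inr i ∈ S →
      (¬ X S (q - 1) ∧ t = 0) ∨ (X S (q - 1) ∧ t ≤ r ∧ t < q - 1 ∧ i.1 ≠ t) := by
    intro i hi
    rcases h with ⟨h1, h2⟩ | ⟨h1, h2, h3, h4, h5, h6⟩
    · exact Or.inl ⟨h1, h2⟩
    · exact Or.inr ⟨h1, h2, h3, fun hc => h5 ⟨by omega, by simpa [← hc] using hi⟩⟩
  clear h
  by_cases hX : X S (q - 1) <;>
    simp only [hX, not_true_eq_false, not_false_eq_true, false_and, true_and, false_or, or_false]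
      at hl hr <;>
    rcases u with u | u <;> rcases v with v | v
  · have h1 := hl u hu
    have h2 := hl v hv
    rw [sum_adj_inl, cyc_adj hq]
    simp only [sw, A, comap_adj, pathGraph_adj]
    split_ifs <;> simp only [finSumFinEquiv_apply_left, finSumFinEquiv_apply_right, Fin.val_castAdd, Fin.val_natAdd] <;> omega
  · have h1 := hl u hu
    have h2 := hr v hv
    refine iff_of_false ?_ (by simp [SimpleGraph.sum])
    simp only [sw, A, comap_adj, pathGraph_adj]
    split_ifs <;> simp only [finSumFinEquiv_apply_left, finSumFinEquiv_apply_right, Fin.val_castAdd, Fin.val_natAdd] <;> omega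
  · have h1 := hr u hu
    have h2 := hl v hv
    refine iff_of_false ?_ (by simp [SimpleGraph.sum])
    simp only [sw, A, comap_adj, pathGraph_adj]
    split_ifs <;> simp only [finSumFinEquiv_apply_left, finSumFinEquiv_apply_right, Fin.val_castAdd, Fin.val_natAdd] <;> omega
  · have h1 := hr u hu
    have h2 := hr v hv
    rw [sum_adj_inr, pathGraph_adj]
    simp only [sw, A, comap_adj, pathGraph_adj]
    split_ifs <;> simp only [finSumFinEquiv_apply_left, finSumFinEquiv_apply_right, Fin.val_castAdd, Fin.val_natAdd] <;> omega
  · have h1 := hl u hu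
    have h2 := hl v hv
    rw [sum_adj_inl, cyc_adj hq]
    simp only [sw, A, comap_adj, pathGraph_adj]
    split_ifs <;> simp only [finSumFinEquiv_apply_left, finSumFinEquiv_apply_right, Fin.val_castAdd, Fin.val_natAdd] <;> omega
  · have h1 := hl u hu
    have h2 := hr v hv
    refine iff_of_false ?_ (by simp [SimpleGraph.sum])
    simp only [sw, A, comap_adj, pathGraph_adj]
    split_ifs <;> simp only [finSumFinEquiv_apply_left, finSumFinEquiv_apply_right, Fin.val_castAdd, Fin.val_natAdd] <;> omega
  · have h1 := hr u hu
    have h2 := hl v hv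
    refine iff_of_false ?_ (by simp [SimpleGraph.sum])
    simp only [sw, A, comap_adj, pathGraph_adj]
    split_ifs <;> simp only [finSumFinEquiv_apply_left, finSumFinEquiv_apply_right, Fin.val_castAdd, Fin.val_natAdd] <;> omega
  · have h1 := hr u hu
    have h2 := hr v hv
    rw [sum_adj_inr, pathGraph_adj]
    simp only [sw, A, comap_adj, pathGraph_adj]
    split_ifs <;> simp only [finSumFinEquiv_apply_left, finSumFinEquiv_apply_right, Fin.val_castAdd, Fin.val_natAdd] <;> omega

theorem iso_sw {q r : ℕ} (hq : 3 ≤ q) (S : Finset (Fin q ⊕ Fin r)) (t : ℕ) (h : R S t) :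
    Nonempty (((cycleGraph q ⊕g pathGraph r).induce (↑S : Set (Fin q ⊕ Fin r))) ≃g
      ((A q r).induce (↑(S.map (swE q r t).toEmbedding) : Set (Fin q ⊕ Fin r)))) := by
  refine ⟨⟨(swE q r t).subtypeEquiv (by intro a; simp), ?_⟩⟩
  rintro ⟨a, ha⟩ ⟨b, hb⟩
  exact adj_sw hq S t h a b (by simpa using ha) (by simpa using hb)

theorem card_of_iso {V : Type*} {k : ℕ} {G : SimpleGraph V} {L : SimpleGraph (Fin k)}
    {s : Finset V} (e : (G.induce (↑s : Set V)) ≃g L) : s.card = k := by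
  have := Fintype.card_congr e.toEquiv
  simpa using this

open Classical in
noncomputable def T {q r : ℕ} (S : Finset (Fin q ⊕ Fin r)) : ℕ :=
  if h : ∃ t, R S t then h.choose else 0

theorem T_spec {q r : ℕ} (S : Finset (Fin q ⊕ Fin r)) (h : ∃ t, R S t) : R S (T S) := by
  rw [T, dif_pos h]; exact h.choose_spec

noncomputable def phi {q r : ℕ} (S : Finset (Fin q ⊕ Fin r)) : Finset (Fin q ⊕ Fin r) :=
  S.map (swE q r (T S)).toEmbedding

theorem phi_phi {q r : ℕ} (hq : 3 ≤ q) (S : Finset (Fin q ⊕ Fin r)) (h : ∃ t, R S t) :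
    phi (phi S) = S := by
  have h1 : R (phi S) (T S) := R_sw S _ hq (T_spec S h)
  have h2 : T (phi S) = T S := R_unique _ _ _ (T_spec _ ⟨_, h1⟩) h1
  ext v
  rw [phi, mem_swE, h2, phi, mem_swE, sw_sw]

end S12

open S12

/-- For a linear forest `L` with `k` vertices, if `q ≥ k+1`, `q ≥ 3`,
`r ≥ k-1`, then `s(P_{q+r}, L) = s(C_q + P_r, L)`. -/
theorem stmt_12 (k q r : ℕ) (L : SimpleGraph (Fin k)) (hL : IsLinearForest L)
    (hq : k + 1 ≤ q) (hq3 : 3 ≤ q) (hr : k - 1 ≤ r) :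
    copies (pathGraph (q + r)) L = copies (cycleGraph q ⊕g pathGraph r) L := by
  rw [← copies_congr (A q r) (pathGraph (q + r)) finSumFinEquiv (fun u v => Iff.rfl) L]
  have hR : ∀ S : Finset (Fin q ⊕ Fin r), S.card = k → ∃ t, R S t := by
    intro S hS
    exact R_exists S (by omega) (by omega)
  have hcard : ∀ S : Finset (Fin q ⊕ Fin r), (phi S).card = S.card := fun S =>
    Finset.card_map _
  unfold copies
  refine Set.ncard_congr (fun s _ => phi s) ?_ ?_ ?_
  · rintro s ⟨hs⟩
    have hk := card_of_iso hs
    have hf : Nonempty (((cycleGraph q ⊕g pathGraph r).induce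
        (↑(phi s) : Set (Fin q ⊕ Fin r))) ≃g
        ((A q r).induce (↑(phi (phi s)) : Set (Fin q ⊕ Fin r)))) :=
      iso_sw hq3 (phi s) _ (T_spec _ (hR _ ((hcard s).trans hk)))
    rw [phi_phi hq3 _ (hR _ hk)] at hf
    obtain ⟨f⟩ := hf
    exact ⟨f.trans hs⟩
  · rintro a b ⟨ha⟩ ⟨hb⟩ h
    have := congrArg phi h
    simpa only [phi_phi hq3 _ (hR _ (card_of_iso ha)), phi_phi hq3 _ (hR _ (card_of_iso hb))]
      using this
  · rintro b ⟨hb⟩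
    have hk := card_of_iso hb
    refine ⟨phi b, ?_, phi_phi hq3 _ (hR _ hk)⟩
    obtain ⟨f⟩ := iso_sw hq3 b _ (T_spec _ (hR _ hk))
    exact ⟨f.symm.trans hb⟩
end

section
/- Let L be a linear forest with k vertices, and let G be a finite simple 2-regular graph with n vertices such that every connected component of G is a cycle with at least k+1 vertices. Then s(G, L) = s(C_n, L). In particular, the number of induced copies of L in such a graph depends only on L and n. -/
open SimpleGraph

def Dgn {U : Type*} (K : SimpleGraph U) : Prop :=
  ∀ S : Set U, S.Nonempty → ∃ v ∈ S, ∀ x ∈ S, ∀ y ∈ S, K.Adj v x → K.Adj v y → x = y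

def DgnK {U : Type*} (K : SimpleGraph U) (k : ℕ) : Prop :=
  ∀ S : Set U, S.Nonempty → S.ncard ≤ k →
    ∃ v ∈ S, ∀ x ∈ S, ∀ y ∈ S, K.Adj v x → K.Adj v y → x = y

open Classical in
noncomputable def splitHom {U V : Type*} (K : SimpleGraph U) (G : SimpleGraph V) (v : U) :
    (K →g G) ≃ Σ g : (K.induce ({v}ᶜ : Set U) →g G),
      {w : V // ∀ u : ({v}ᶜ : Set U), K.Adj v u → G.Adj (g u) w} where
  toFun f := ⟨f.comp (Embedding.induce _).toHom, ⟨f v, fun u h => f.map_adj h.symm⟩⟩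
  invFun p :=
    { toFun := fun u => if h : u = v then p.2.1 else p.1 ⟨u, h⟩
      map_rel' := by
        intro a b hab
        by_cases ha : a = v
        · by_cases hb : b = v
          · subst ha; subst hb; exact absurd hab (K.loopless.irrefl _)
          · subst ha
            simp only [hb, dite_true, dite_false]
            exact (p.2.2 ⟨b, hb⟩ hab).symm
        · by_cases hb : b = v
          · subst hb
            simp only [ha, dite_true, dite_false]
            exact (p.2.2 ⟨a, ha⟩ hab.symm)
          · simp only [ha, hb, dite_false]
            exact p.1.map_adj (v := ⟨a, ha⟩) (w := ⟨b, hb⟩) hab }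
  left_inv f := by
    ext u
    by_cases h : u = v
    · subst h; simp
    · simp [h]
  right_inv p := by
    obtain ⟨g, w, hw⟩ := p
    have : (((⟨fun u => if h : u = v then w else g ⟨u, h⟩, by
        intro a b hab
        by_cases ha : a = v
        · by_cases hb : b = v
          · subst ha; subst hb; exact absurd hab (K.loopless.irrefl _)
          · subst ha
            simp only [hb, dite_true, dite_false]
            exact (hw ⟨b, hb⟩ hab).symm
        · by_cases hb : b = v
          · subst hb
            simp only [ha, dite_true, dite_false]
            exact (hw ⟨a, ha⟩ hab.symm)
          · simp only [ha, hb, dite_false]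
            exact g.map_adj (v := ⟨a, ha⟩) (w := ⟨b, hb⟩) hab⟩ : K →g G)).comp
            (Embedding.induce (G := K) ({v}ᶜ : Set U)).toHom) = g := by
      ext u
      have : u.1 ≠ v := u.2
      simp [this]
    refine Sigma.ext this ?_
    refine (Subtype.heq_iff_coe_eq ?_).2 ?_
    · intro x
      refine forall_congr' fun u => imp_congr_right fun _ => ?_
      exact iff_of_eq (congrArg (fun z => G.Adj z x) (DFunLike.congr_fun this u))
    · simp

lemma fiber_card {U V : Type*} [Fintype V] (K : SimpleGraph U) (G : SimpleGraph V)
    (hreg : ∀ v, (G.neighborSet v).ncard = 2) (v : U)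
    (hv : ∀ x y, K.Adj v x → K.Adj v y → x = y) [Decidable (∃ x, K.Adj v x)]
    (g : K.induce ({v}ᶜ : Set U) →g G) :
    Nat.card {w : V // ∀ u : ({v}ᶜ : Set U), K.Adj v u → G.Adj (g u) w} =
      if ∃ x, K.Adj v x then 2 else Fintype.card V := by
  split_ifs with h
  · obtain ⟨x, hx⟩ := h
    have hxv : x ∈ ({v}ᶜ : Set U) := hx.ne'
    rw [← hreg (g ⟨x, hxv⟩), ← Nat.card_coe_set_eq]
    refine Nat.card_congr (Equiv.subtypeEquivRight fun w => ?_)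
    constructor
    · intro h; exact h ⟨x, hxv⟩ hx
    · rintro h ⟨u, hu⟩ hvu
      obtain rfl := hv _ _ hx hvu
      exact h
  · rw [← Nat.card_eq_fintype_card]
    refine Nat.card_congr (Equiv.subtypeUnivEquiv fun w u hu => ?_)
    exact absurd ⟨_, hu⟩ h

lemma hom_card {V W : Type*} [Fintype V] [Fintype W] (G : SimpleGraph V) (G' : SimpleGraph W)
    (hc : Fintype.card V = Fintype.card W)
    (hreg : ∀ v, (G.neighborSet v).ncard = 2) (hreg' : ∀ v, (G'.neighborSet v).ncard = 2)
    (n : ℕ) : ∀ {U : Type*} [Finite U] (K : SimpleGraph U), Nat.card U = n → Dgn K →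
      Nat.card (K →g G) = Nat.card (K →g G') := by
  classical
  induction n with
  | zero =>
    intro U _ K h0 _
    have : IsEmpty U := by
      rcases Nat.card_eq_zero.1 h0 with h | h
      · exact h
      · exact absurd h (by simpa using ‹Finite U›)
    have e : ∀ {Z : Type _} (H : SimpleGraph Z), Nat.card (K →g H) = 1 := by
      intro Z H
      rw [Nat.card_eq_one_iff_unique]
      exact ⟨⟨fun a b => by ext u; exact this.elim u⟩, ⟨⟨fun u => this.elim u, fun {u} => this.elim u⟩⟩⟩
    have e' : ∀ {Z : Type _} (H : SimpleGraph Z), Nat.card (K →g H) = 1 := by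
      intro Z H
      rw [Nat.card_eq_one_iff_unique]
      exact ⟨⟨fun a b => by ext u; exact this.elim u⟩, ⟨⟨fun u => this.elim u, fun {u} => this.elim u⟩⟩⟩
    rw [e, e']
  | succ n ih =>
    intro U _ K h0 hD
    have : Nonempty U := by
      by_contra h
      rw [not_nonempty_iff] at h
      simp at h0
    obtain ⟨v, -, hv⟩ := hD Set.univ Set.univ_nonempty
    replace hv : ∀ x y, K.Adj v x → K.Adj v y → x = y := fun x y => hv x trivial y trivial
    have hcard : Nat.card ({v}ᶜ : Set U) = n := by
      rw [Nat.card_coe_set_eq, Set.ncard_compl, h0]; simp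
    have hD' : Dgn (K.induce ({v}ᶜ : Set U)) := by
      intro S hS
      obtain ⟨w, ⟨w', hw', rfl⟩, hw⟩ := hD (Subtype.val '' S) (hS.image _)
      refine ⟨w', hw', fun x hx y hy h1 h2 => Subtype.ext ?_⟩
      exact hw x ⟨x, hx, rfl⟩ y ⟨y, hy, rfl⟩ h1 h2
    have := ih (K.induce ({v}ᶜ : Set U)) hcard hD'
    have : Finite (K.induce ({v}ᶜ : Set U) →g G) := DFunLike.finite _
    have : Finite (K.induce ({v}ᶜ : Set U) →g G') := DFunLike.finite _
    have := Fintype.ofFinite (K.induce ({v}ᶜ : Set U) →g G)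
    have := Fintype.ofFinite (K.induce ({v}ᶜ : Set U) →g G')
    rw [Nat.card_congr (splitHom K G v), Nat.card_congr (splitHom K G' v), Nat.card_sigma,
      Nat.card_sigma]
    simp only [fiber_card K G hreg v hv, fiber_card K G' hreg' v hv, hc, Finset.sum_const,
      Finset.card_univ, ← Nat.card_eq_fintype_card, smul_eq_mul]
    congr 1

def ftype {X V : Type*} (G : SimpleGraph V) (f : X → V) : (X → X → Prop) × (X → X → Prop) :=
  (fun x y => f x = f y, fun x y => G.Adj (f x) (f y))

noncomputable def factorEquiv {X V W : Type*} (G : SimpleGraph V) (G' : SimpleGraph W) (f : X → V) :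
    (G.induce (Set.range f) →g G') ≃ {g : X → W // ftype G f ≤ ftype G' g} where
  toFun h := ⟨fun x => h ⟨f x, x, rfl⟩, by
    refine ⟨fun x y hxy => ?_, fun x y hxy => ?_⟩
    · have hxy : f x = f y := hxy
      change h _ = h _
      congr 2
    · exact h.map_adj (v := ⟨f x, x, rfl⟩) (w := ⟨f y, y, rfl⟩) hxy⟩
  invFun g := ⟨fun v => g.1 v.2.choose, by
    intro a b hab
    apply g.2.2
    change G.Adj _ _
    rw [a.2.choose_spec, b.2.choose_spec]
    exact hab⟩
  left_inv h := by
    ext v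
    change h _ = h _
    congr 1
    exact Subtype.ext v.2.choose_spec
  right_inv g := by
    ext x
    have : ∃ y, f y = f x := ⟨x, rfl⟩
    exact g.2.1 _ _ this.choose_spec

lemma N_eq {X V W : Type*} [Fintype X] [Fintype V] [Fintype W]
    (G : SimpleGraph V) (G' : SimpleGraph W)
    (hc : Fintype.card V = Fintype.card W)
    (hreg : ∀ v, (G.neighborSet v).ncard = 2) (hreg' : ∀ v, (G'.neighborSet v).ncard = 2)
    (hD : DgnK G (Fintype.card X)) (f : X → V) :
    Nat.card {g : X → V // ftype G f ≤ ftype G g} =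
      Nat.card {g : X → W // ftype G f ≤ ftype G' g} := by
  rw [← Nat.card_congr (factorEquiv G G f), ← Nat.card_congr (factorEquiv G G' f)]
  refine hom_card G G' hc hreg hreg' _ _ rfl ?_
  intro S hS
  have hle : (Subtype.val '' S).ncard ≤ Fintype.card X := by
    calc _ ≤ (Set.range f).ncard := Set.ncard_le_ncard (by rintro _ ⟨x, _, rfl⟩; exact x.2) (Set.toFinite _)
      _ ≤ _ := by
        rw [← Set.image_univ, ← Nat.card_eq_fintype_card, ← Set.ncard_univ]
        exact Set.ncard_image_le (Set.toFinite _)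
  obtain ⟨w, ⟨w', hw', rfl⟩, hw⟩ := hD (Subtype.val '' S) (hS.image _) hle
  refine ⟨w', hw', fun x hx y hy h1 h2 => Subtype.ext ?_⟩
  exact hw x ⟨x, hx, rfl⟩ y ⟨y, hy, rfl⟩ h1 h2

open Classical in
lemma le_sum {X Z : Type*} [Fintype X] [Fintype ((X → X → Prop) × (X → X → Prop))]
    (T : (X → X → Prop) × (X → X → Prop)) [Fintype Z] (H : SimpleGraph Z) :
    Nat.card {g : X → Z // T ≤ ftype H g} = Nat.card {g : X → Z // ftype H g = T} +
      ∑ T' ∈ Finset.univ.filter (fun T' => T < T'), Nat.card {g : X → Z // ftype H g = T'} := by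
  simp only [Nat.card_eq_fintype_card, Fintype.card_subtype]
  have h1 : Finset.univ.filter (fun T' => T ≤ T') =
      insert T (Finset.univ.filter (fun T' => T < T')) := by
    ext T'
    simp only [Finset.mem_filter, Finset.mem_univ, true_and, Finset.mem_insert]
    rw [le_iff_eq_or_lt, eq_comm]
  rw [← Finset.sum_insert (f := fun T' => (Finset.univ.filter
    (fun g : X → Z => ftype H g = T')).card) (by simp), ← h1]
  rw [Finset.card_eq_sum_card_fiberwise (f := ftype H)
    (t := Finset.univ.filter (fun T' => T ≤ T'))]
  · refine Finset.sum_congr rfl fun T' hT' => ?_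
    congr 1
    ext g
    simp only [Finset.mem_filter, Finset.mem_univ, true_and] at hT' ⊢
    constructor
    · exact fun h => h.2
    · rintro rfl; exact ⟨hT', rfl⟩
  · intro g hg
    simpa using hg

lemma exact_eq {X V W : Type*} [Fintype X] [Fintype V] [Fintype W]
    (G : SimpleGraph V) (G' : SimpleGraph W)
    (hc : Fintype.card V = Fintype.card W)
    (hreg : ∀ v, (G.neighborSet v).ncard = 2) (hreg' : ∀ v, (G'.neighborSet v).ncard = 2)
    (hD : DgnK G (Fintype.card X)) (hD' : DgnK G' (Fintype.card X))
    (T : (X → X → Prop) × (X → X → Prop)) :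
    Nat.card {g : X → V // ftype G g = T} = Nat.card {g : X → W // ftype G' g = T} := by
  classical
  induction T using WellFoundedGT.induction with
  | ind T ih =>
  have hfin : Finite ((X → X → Prop) × (X → X → Prop)) := inferInstance
  have := Fintype.ofFinite ((X → X → Prop) × (X → X → Prop))
  have hs := Finset.sum_congr (s₁ := Finset.univ.filter (fun T' => T < T')) rfl
    (fun T' hT' => ih T' (Finset.mem_filter.1 hT').2)
  have k1 := le_sum T G
  have k2 := le_sum T G'
  by_cases h1 : ∃ f, ftype G f = T
  · obtain ⟨f, hf⟩ := h1
    have := N_eq G G' hc hreg hreg' hD f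
    rw [hf] at this
    omega
  by_cases h2 : ∃ f, ftype G' f = T
  · obtain ⟨f, hf⟩ := h2
    have := N_eq G' G hc.symm hreg' hreg hD' f
    rw [hf] at this
    omega
  push Not at h1 h2
  have : IsEmpty {g : X → V // ftype G g = T} := ⟨fun g => h1 _ g.2⟩
  have : IsEmpty {g : X → W // ftype G' g = T} := ⟨fun g => h2 _ g.2⟩
  simp

lemma copies_mul {k : ℕ} {V : Type*} [Fintype V] (L : SimpleGraph (Fin k)) (G : SimpleGraph V) :
    Nat.card {g : Fin k → V // ftype G g = ((fun x y => x = y), L.Adj)} =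
      copies G L * Nat.card (L ≃g L) := by
  classical
  let F : (Σ s : {s : Finset V | Nonempty ((G.induce (↑s : Set V)) ≃g L)},
      (L ≃g G.induce (↑s.1 : Set V))) →
      {g : Fin k → V // ftype G g = ((fun x y => x = y), L.Adj)} := fun p =>
    ⟨fun x => (p.2 x).1, by
      refine Prod.ext ?_ ?_
      · funext x y
        simp [ftype, Subtype.val_inj]
      · funext x y
        exact propext p.2.map_adj_iff⟩
  have hF : Function.Bijective F := by
    constructor
    · rintro ⟨⟨s, hs⟩, e⟩ ⟨⟨t, ht⟩, e'⟩ h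
      have h' : ∀ x, (e x).1 = (e' x).1 := fun x => congrFun (congrArg Subtype.val h) x
      have hst : s = t := by
        ext v
        constructor
        · intro hv
          have := h' (e.symm ⟨v, hv⟩)
          rw [e.apply_symm_apply] at this
          rw [show v = _ from this]
          exact (e' _).2
        · intro hv
          have := h' (e'.symm ⟨v, hv⟩)
          rw [e'.apply_symm_apply] at this
          rw [show v = _ from this.symm]
          exact (e _).2
      subst hst
      have : e = e' := by
        ext x
        exact h' x
      subst this
      rfl
    · rintro ⟨g, hg⟩
      have hinj : ∀ x y, g x = g y ↔ x = y := fun x y =>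
        iff_of_eq (congrFun (congrFun (congrArg Prod.fst hg) x) y)
      have hadj : ∀ x y, G.Adj (g x) (g y) ↔ L.Adj x y := fun x y =>
        iff_of_eq (congrFun (congrFun (congrArg Prod.snd hg) x) y)
      let e0 : Fin k → (↑(Finset.univ.image g) : Set V) := fun x => ⟨g x, by simp⟩
      have he0 : Function.Bijective e0 := by
        constructor
        · intro x y h
          exact (hinj x y).1 (congrArg Subtype.val h)
        · rintro ⟨v, hv⟩
          have hv' := hv
          simp only [Finset.coe_image, Finset.coe_univ, Set.image_univ, Set.mem_range] at hv'
          obtain ⟨x, rfl⟩ := hv'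
          exact ⟨x, rfl⟩
      let e : L ≃g G.induce (↑(Finset.univ.image g) : Set V) :=
        ⟨Equiv.ofBijective e0 he0, fun {x y} => hadj x y⟩
      exact ⟨⟨⟨Finset.univ.image g, ⟨e.symm⟩⟩, e⟩, rfl⟩
  rw [← Nat.card_congr (Equiv.ofBijective F hF)]
  have hfin : ∀ s : {s : Finset V | Nonempty ((G.induce (↑s : Set V)) ≃g L)},
      Finite (L ≃g G.induce (↑s.1 : Set V)) := fun s => DFunLike.finite _
  have := Fintype.ofFinite {s : Finset V | Nonempty ((G.induce (↑s : Set V)) ≃g L)}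
  rw [Nat.card_sigma]
  have hc : ∀ s : {s : Finset V | Nonempty ((G.induce (↑s : Set V)) ≃g L)},
      Nat.card (L ≃g G.induce (↑s.1 : Set V)) = Nat.card (L ≃g L) := by
    rintro ⟨s, ⟨e⟩⟩
    refine Nat.card_congr ⟨fun a => a.trans e, fun a => a.trans e.symm, ?_, ?_⟩
    · intro a; ext x; simp
    · intro a; ext x; simp
  simp only [hc, Finset.sum_const, Finset.card_univ, smul_eq_mul]
  rw [← Nat.card_eq_fintype_card, Nat.card_coe_set_eq, copies]

lemma dgnK_of {V : Type*} [Fintype V] (k : ℕ) (G : SimpleGraph V)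
    (hreg : ∀ v, (G.neighborSet v).ncard = 2)
    (hcyc : ∀ c : G.ConnectedComponent, k + 1 ≤ c.supp.ncard) : DgnK G k := by
  intro S ⟨v, hv⟩ hk
  by_contra! hcon
  have hcl : ∀ w ∈ S, ∀ u, G.Adj w u → u ∈ S := by
    intro w hw u hu
    obtain ⟨x, hx, y, hy, h1, h2, hne⟩ := hcon w hw
    have : ({x, y} : Set V) = G.neighborSet w := by
      apply Set.eq_of_subset_of_ncard_le
      · rintro z (rfl | rfl) <;> assumption
      · rw [hreg, Set.ncard_pair hne]
      · exact Set.toFinite _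
    have hu' : u ∈ ({x, y} : Set V) := by rw [this]; exact hu
    rcases hu' with rfl | rfl <;> assumption
  have hr : ∀ u w, G.Walk u w → u ∈ S → w ∈ S := by
    intro u w p
    induction p with
    | nil => exact id
    | cons h p ih => intro hu; exact ih (hcl _ hu _ h)
  have hsub : (G.connectedComponentMk v).supp ⊆ S := by
    intro w hw
    obtain ⟨p⟩ := (ConnectedComponent.exact hw).symm
    exact hr _ _ p hv
  have := Set.ncard_le_ncard hsub (Set.toFinite _)
  have := hcyc (G.connectedComponentMk v)
  omega

theorem stmt_13 {V : Type*} [Fintype V] (k n : ℕ)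
    (L : SimpleGraph (Fin k)) (hL : IsLinearForest L)
    (G : SimpleGraph V) (hn : Fintype.card V = n)
    (hreg : ∀ v, (G.neighborSet v).ncard = 2)
    (hcyc : ∀ c : G.ConnectedComponent, ∃ m, k + 1 ≤ m ∧ CompIsCycle G c m) :
    copies G L = copies (cycleGraph n) L := by
  classical
  have hcomp : ∀ c : G.ConnectedComponent, k + 1 ≤ c.supp.ncard ∧ 3 ≤ c.supp.ncard := by
    intro c
    obtain ⟨m, hm, h3, ⟨e⟩⟩ := hcyc c
    have : c.supp.ncard = m := by
      rw [← Nat.card_coe_set_eq, Nat.card_congr e.toEquiv]; simp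
    omega
  have hD : DgnK G k := dgnK_of k G hreg fun c => (hcomp c).1
  have hn3 : n = 0 ∨ (3 ≤ n ∧ k + 1 ≤ n) := by
    rcases isEmpty_or_nonempty V with h | ⟨⟨v⟩⟩
    · left; rw [← hn]; simp
    · right
      have := hcomp (G.connectedComponentMk v)
      have h2 := Set.ncard_le_card (G.connectedComponentMk v).supp
      rw [Nat.card_eq_fintype_card, hn] at h2
      omega
  have hreg' : ∀ v, ((cycleGraph n).neighborSet v).ncard = 2 := by
    intro v
    rcases hn3 with rfl | ⟨h3, -⟩
    · exact v.elim0
    · obtain ⟨n, rfl⟩ := Nat.exists_eq_add_of_le' h3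
      have := cycleGraph_degree_three_le (v := v)
      rw [← this, ← card_neighborSet_eq_degree, ← Nat.card_coe_set_eq, Nat.card_eq_fintype_card]
  have hD' : DgnK (cycleGraph n) k := by
    apply dgnK_of k _ hreg'
    intro c
    rcases hn3 with rfl | ⟨h3, hk⟩
    · induction c using ConnectedComponent.ind with
      | h v => exact v.elim0
    · obtain ⟨n, rfl⟩ := Nat.exists_eq_add_of_le' h3
      have hcon := cycleGraph_connected (n := n + 2)
      have : c.supp = Set.univ := by
        ext w
        induction c using ConnectedComponent.ind with
        | h v => simpa using hcon.preconnected w v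
      rw [this, Set.ncard_univ]
      simpa using hk
  have h := exact_eq (X := Fin k) G (cycleGraph n) (by simpa using hn) hreg hreg'
    (by simpa using hD) (by simpa using hD') ((fun x y => x = y), L.Adj)
  rw [copies_mul, copies_mul] at h
  have : Finite (L ≃g L) := DFunLike.finite _
  have : Nonempty (L ≃g L) := ⟨Iso.refl⟩
  exact Nat.eq_of_mul_eq_mul_right Nat.card_pos h
end

section
/- Let G be a finite simple 2-regular graph with n vertices such that every connected component of G is a cycle with more than k vertices. Then the number of k-element independent sets of vertices of G equals the number of k-element independent sets of vertices of the cycle C_n; in particular, this number depends only on k and n. -/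
open SimpleGraph

namespace Stmt14

open Classical in
/-- product of the swaps `p j ↔ q j`, `j < i` -/
noncomputable def tau {V : Type*} (p q : ℕ → V) : ℕ → Equiv.Perm V
  | 0 => 1
  | i + 1 => tau p q i * Equiv.swap (p i) (q i)

theorem tau_fix {V : Type*} (p q : ℕ → V) (i : ℕ) (z : V)
    (h : ∀ j < i, z ≠ p j ∧ z ≠ q j) : tau p q i z = z := by
  classical
  induction i with
  | zero => rfl
  | succ i ih =>
    simp only [tau, Equiv.Perm.mul_apply]
    rw [Equiv.swap_apply_of_ne_of_ne (h i (by omega)).1 (h i (by omega)).2]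
    exact ih fun j hj => h j (by omega)

theorem tau_pq {V : Type*} (p q : ℕ → V) (k : ℕ)
    (hp : ∀ i ≤ k, ∀ j ≤ k, p i = p j → i = j)
    (hq : ∀ i ≤ k, ∀ j ≤ k, q i = q j → i = j)
    (hpq : ∀ i ≤ k, ∀ j ≤ k, p i ≠ q j) (i : ℕ) (hi : i ≤ k) (j : ℕ) (hj : j < i) :
    tau p q i (p j) = q j ∧ tau p q i (q j) = p j := by
  classical
  induction i with
  | zero => omega
  | succ i ih =>
    simp only [tau, Equiv.Perm.mul_apply]
    rcases Nat.lt_succ_iff_lt_or_eq.1 hj with h | h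
    · rw [Equiv.swap_apply_of_ne_of_ne, Equiv.swap_apply_of_ne_of_ne]
      · exact ih (by omega) h
      · exact (hpq i (by omega) j (by omega)).symm
      · intro e; have := hq j (by omega) i (by omega) e; omega
      · intro e; have := hp j (by omega) i (by omega) e; omega
      · exact hpq j (by omega) i (by omega)
    · subst h
      rw [Equiv.swap_apply_left, Equiv.swap_apply_right]
      constructor
      · apply tau_fix
        intro l hl
        refine ⟨(hpq l (by omega) j (by omega)).symm, ?_⟩
        intro e; have := hq j (by omega) l (by omega) e; omega
      · apply tau_fix
        intro l hl
        refine ⟨?_, hpq j (by omega) l (by omega)⟩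
        intro e; have := hp j (by omega) l (by omega) e; omega

theorem tau_invol {V : Type*} (p q : ℕ → V) (k : ℕ)
    (hp : ∀ i ≤ k, ∀ j ≤ k, p i = p j → i = j)
    (hq : ∀ i ≤ k, ∀ j ≤ k, q i = q j → i = j)
    (hpq : ∀ i ≤ k, ∀ j ≤ k, p i ≠ q j) (i : ℕ) (hi : i ≤ k) (z : V) :
    tau p q i (tau p q i z) = z := by
  classical
  by_cases h : ∀ j < i, z ≠ p j ∧ z ≠ q j
  · rw [tau_fix p q i z h, tau_fix p q i z h]
  · push Not at h
    obtain ⟨j, hj, h⟩ := h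
    have := tau_pq p q k hp hq hpq i hi j hj
    by_cases e : z = p j
    · rw [e, this.1, this.2]
    · rw [h e, this.2, this.1]

def Ind {V : Type*} (σ : V → V) (k : ℕ) : Set (Finset V) :=
  {s | s.card = k ∧ ∀ u ∈ s, σ u ∉ s}

open Classical in
noncomputable def idx {V : Type*} (p q : ℕ → V) (s : Finset V) : ℕ :=
  if h : ∃ i, p i ∉ s ∧ q i ∉ s then Nat.find h else 0

theorem idx_eq {V : Type*} (p q : ℕ → V) (s : Finset V) (i : ℕ)
    (h1 : p i ∉ s ∧ q i ∉ s) (h2 : ∀ j < i, p j ∈ s ∨ q j ∈ s) : idx p q s = i := by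
  classical
  have h : ∃ i, p i ∉ s ∧ q i ∉ s := ⟨i, h1⟩
  rw [idx, dif_pos h, Nat.find_eq_iff]
  refine ⟨h1, fun j hj => ?_⟩
  have := h2 j hj
  tauto

theorem idx_ex {V : Type*} (p q : ℕ → V) (k : ℕ)
    (hp : ∀ i ≤ k, ∀ j ≤ k, p i = p j → i = j)
    (hq : ∀ i ≤ k, ∀ j ≤ k, q i = q j → i = j)
    (hpq : ∀ i ≤ k, ∀ j ≤ k, p i ≠ q j) (s : Finset V) (hs : s.card = k) :
    ∃ i ≤ k, (p i ∉ s ∧ q i ∉ s) ∧ (∀ j < i, p j ∈ s ∨ q j ∈ s) := by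
  classical
  have h : ∃ i ≤ k, p i ∉ s ∧ q i ∉ s := by
    by_contra! hc
    let f : ℕ → V := fun i => if p i ∈ s then p i else q i
    have : (Finset.range (k+1)).card ≤ s.card := by
      apply Finset.card_le_card_of_injOn f
      · intro i hi
        have hi : i ≤ k := by simpa [Nat.lt_succ_iff] using hi
        by_cases e : p i ∈ s
        · simp [f, e]
        · simp [f, e, hc i hi e]
      · intro i hi j hj
        have hi : i ≤ k := by simpa [Nat.lt_succ_iff] using hi
        have hj : j ≤ k := by simpa [Nat.lt_succ_iff] using hj
        intro e
        simp only [f] at e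
        split_ifs at e
        · exact hp i hi j hj e
        · exact absurd e (hpq i hi j hj)
        · exact absurd e.symm (hpq j hj i hi)
        · exact hq i hi j hj e
    simp at this
    omega
  refine ⟨Nat.find h, (Nat.find_spec h).1, (Nat.find_spec h).2, fun j hj => ?_⟩
  have h1 := Nat.find_min h hj
  have h2 := (Nat.find_spec h).1
  have h3 : j ≤ k := by omega
  tauto

theorem ind_le {V : Type*} [Fintype V] (σ σ' : V → V) (hσ : Function.Injective σ)
    (p q : ℕ → V) (k : ℕ) (x' y' : V)
    (hp : ∀ i ≤ k, ∀ j ≤ k, p i = p j → i = j)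
    (hq : ∀ i ≤ k, ∀ j ≤ k, q i = q j → i = j)
    (hpq : ∀ i ≤ k, ∀ j ≤ k, p i ≠ q j)
    (hσp : ∀ j < k, σ (p j) = p (j+1)) (hσq : ∀ j < k, σ (q j) = q (j+1))
    (hσp' : ∀ j < k, σ' (p j) = p (j+1)) (hσq' : ∀ j < k, σ' (q j) = q (j+1))
    (hx : σ x' = p 0) (hy : σ y' = q 0) (hx' : σ' x' = q 0) (hy' : σ' y' = p 0)
    (hoth : ∀ u, u ≠ x' → u ≠ y' → σ' u = σ u) :
    (Ind σ k).ncard ≤ (Ind σ' k).ncard := by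
  classical
  let F : Finset V → Finset V := fun s => s.map (tau p q (idx p q s)).toEmbedding
  have memF : ∀ s i, i ≤ k → idx p q s = i → ∀ z, z ∈ F s ↔ tau p q i z ∈ s := by
    intro s i hi e z
    simp only [F, e, Finset.mem_map, Equiv.coe_toEmbedding]
    constructor
    · rintro ⟨a, ha, rfl⟩
      rwa [tau_invol p q k hp hq hpq i hi]
    · intro h
      exact ⟨_, h, tau_invol p q k hp hq hpq i hi z⟩
  have fixi : ∀ i ≤ k, tau p q i (p i) = p i ∧ tau p q i (q i) = q i := by
    intro i hi
    constructor <;> apply tau_fix <;> intro j hj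
    · refine ⟨fun e => ?_, hpq i hi j (by omega)⟩
      have := hp i hi j (by omega) e; omega
    · refine ⟨(hpq j (by omega) i hi).symm, fun e => ?_⟩
      have := hq i hi j (by omega) e; omega
  have idxF : ∀ s : Finset V, s.card = k → idx p q (F s) = idx p q s := by
    intro s hs
    obtain ⟨i, hi, h1, h2⟩ := idx_ex p q k hp hq hpq s hs
    have e := idx_eq p q s i h1 h2
    rw [e]
    apply idx_eq
    · rw [memF s i hi e, memF s i hi e, (fixi i hi).1, (fixi i hi).2]
      exact h1
    · intro j hj
      have := tau_pq p q k hp hq hpq i hi j hj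
      rw [memF s i hi e, memF s i hi e, this.1, this.2]
      exact (h2 j hj).symm
  have cardF : ∀ s, (F s).card = s.card := fun s => Finset.card_map _
  have FF : ∀ s : Finset V, s.card = k → F (F s) = s := by
    intro s hs
    obtain ⟨i, hi, h1, h2⟩ := idx_ex p q k hp hq hpq s hs
    have e := idx_eq p q s i h1 h2
    ext z
    rw [memF (F s) i hi (by rw [idxF s hs, e]), memF s i hi e, tau_invol p q k hp hq hpq i hi]
  apply Set.ncard_le_ncard_of_injOn F ?_ ?_ (Set.toFinite _)
  · rintro s ⟨hs, hind⟩
    refine ⟨by rw [cardF, hs], ?_⟩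
    obtain ⟨i, hi, h1, h2⟩ := idx_ex p q k hp hq hpq s hs
    have e := idx_eq p q s i h1 h2
    have hT := tau_pq p q k hp hq hpq i hi
    intro u hu
    rw [memF s i hi e] at hu ⊢
    by_cases hu' : ∀ j < i, u ≠ p j ∧ u ≠ q j
    · rw [tau_fix p q i u hu'] at hu
      have h0 : tau p q i (p 0) = if i = 0 then p 0 else q 0 := by
        split_ifs with h
        · subst h; rfl
        · exact (hT 0 (by omega)).1
      have h0' : tau p q i (q 0) = if i = 0 then q 0 else p 0 := by
        split_ifs with h
        · subst h; rfl
        · exact (hT 0 (by omega)).2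
      by_cases ux : u = x'
      · subst ux
        rw [hx', h0']
        split_ifs with h
        · subst h; exact h1.2
        · rw [← hx]; exact hind _ hu
      by_cases uy : u = y'
      · subst uy
        rw [hy', h0]
        split_ifs with h
        · subst h; exact h1.1
        · rw [← hy]; exact hind _ hu
      rw [hoth u ux uy, tau_fix]
      · exact hind u hu
      · intro j hj
        cases j with
        | zero =>
          exact ⟨fun e => ux (hσ (e.trans hx.symm)), fun e => uy (hσ (e.trans hy.symm))⟩
        | succ j =>
          rw [← hσp j (by omega), ← hσq j (by omega)]
          exact ⟨fun e => (hu' j (by omega)).1 (hσ e), fun e => (hu' j (by omega)).2 (hσ e)⟩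
    · push Not at hu'
      obtain ⟨j, hj, h⟩ := hu'
      by_cases ep : u = p j
      · subst ep
        rw [(hT j hj).1] at hu
        rw [hσp' j (by omega)]
        by_cases hji : j + 1 = i
        · rw [hji, (fixi i hi).1]; exact h1.1
        · rw [(hT (j+1) (by omega)).1, ← hσq j (by omega)]
          exact hind _ hu
      · have eq := h ep
        subst eq
        rw [(hT j hj).2] at hu
        rw [hσq' j (by omega)]
        by_cases hji : j + 1 = i
        · rw [hji, (fixi i hi).2]; exact h1.2
        · rw [(hT (j+1) (by omega)).2, ← hσp j (by omega)]
          exact hind _ hu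
  · intro s hs t ht e
    rw [← FF s hs.1, ← FF t ht.1, e]

def Big {V : Type*} (σ : Equiv.Perm V) (k : ℕ) : Prop :=
  ∀ v, k < {w | σ.SameCycle v w}.ncard

theorem big_inj {V : Type*} [Fintype V] (σ : Equiv.Perm V) (k : ℕ) (h : Big σ k) (x : V) :
    ∀ i ≤ k, ∀ j ≤ k, (σ ^ i) x = (σ ^ j) x → i = j := by
  have key : ∀ d, 0 < d → d ≤ k → (σ ^ d) x ≠ x := by
    intro d hd hdk e
    have h1 := h x
    have : {w | σ.SameCycle x w} ⊆ (fun i : ℕ => (σ ^ i) x) '' (Set.Iio d) := by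
      intro w hw
      obtain ⟨n, hn⟩ := Equiv.Perm.SameCycle.exists_nat_pow_eq hw
      refine ⟨n % d, Nat.mod_lt _ hd, ?_⟩
      rw [← hn]
      conv_rhs => rw [← Nat.mod_add_div n d, pow_add, pow_mul, Equiv.Perm.mul_apply]
      rw [Equiv.Perm.pow_apply_eq_self_of_apply_eq_self e]
    have h2 := Set.ncard_le_ncard this (Set.toFinite _)
    have h3 : Set.ncard ((fun i => (σ ^ i) x) '' (Set.Iio d)) ≤ (Set.Iio d).ncard :=
      Set.ncard_image_le (Set.toFinite _)
    have h4 : (Set.Iio d).ncard = d := by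
      rw [← Finset.coe_Iio, Set.ncard_coe_finset]; simp
    omega
  have key2 : ∀ i j, i < j → j ≤ k → (σ ^ i) x ≠ (σ ^ j) x := by
    intro i j hij hj e
    apply key (j - i) (by omega) (by omega)
    have : j = i + (j - i) := by omega
    rw [this, pow_add, Equiv.Perm.mul_apply] at e
    exact ((σ ^ i).injective e).symm
  intro i hi j hj e
  rcases lt_trichotomy i j with h | h | h
  · exact absurd e (key2 i j h hj)
  · exact h
  · exact absurd e.symm (key2 j i h hi)

open Equiv.Perm in
theorem merge_aux {V : Type*} [Fintype V] [DecidableEq V] (σ : Equiv.Perm V) (x y : V)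
    (hxy : ¬ σ.SameCycle x y) :
    (σ * Equiv.swap (σ⁻¹ x) (σ⁻¹ y)).SameCycle x (σ⁻¹ x) := by
  have h : ∃ n : ℕ, (σ ^ n) x = σ⁻¹ x :=
    SameCycle.exists_nat_pow_eq ⟨-1, by simp⟩
  set σ' := σ * Equiv.swap (σ⁻¹ x) (σ⁻¹ y) with hs
  have : ∀ i ≤ Nat.find h, (σ' ^ i) x = (σ ^ i) x := by
    intro i hi
    induction i with
    | zero => rfl
    | succ i ih =>
      rw [pow_succ', pow_succ', Equiv.Perm.mul_apply, ih (by omega), hs,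
        Equiv.Perm.mul_apply, Equiv.Perm.mul_apply, Equiv.swap_apply_of_ne_of_ne]
      · exact Nat.find_min h (by omega)
      · intro e
        apply hxy
        exact ⟨i + 1, by rw [add_comm, zpow_add, Equiv.Perm.mul_apply, zpow_natCast, e]; simp⟩
  refine ⟨Nat.find h, ?_⟩
  rw [zpow_natCast, this _ le_rfl]
  exact Nat.find_spec h

open Equiv.Perm in
theorem merge_same {V : Type*} [Fintype V] [DecidableEq V] (σ : Equiv.Perm V) (x y : V)
    (hxy : ¬ σ.SameCycle x y) :
    (σ * Equiv.swap (σ⁻¹ x) (σ⁻¹ y)).SameCycle x y ∧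
    ∀ v w, σ.SameCycle v w → (σ * Equiv.swap (σ⁻¹ x) (σ⁻¹ y)).SameCycle v w := by
  have hx := merge_aux σ x y hxy
  have hy := merge_aux σ y x (fun h => hxy h.symm)
  rw [Equiv.swap_comm] at hy
  set σ' := σ * Equiv.swap (σ⁻¹ x) (σ⁻¹ y) with hs
  have e1 : σ' (σ⁻¹ x) = y := by simp [hs]
  have h1 : σ'.SameCycle x y := by
    rw [← e1, sameCycle_apply_right]; exact hx
  refine ⟨h1, ?_⟩
  have step : ∀ v, σ'.SameCycle v (σ v) := by
    intro v
    by_cases vx : v = σ⁻¹ x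
    · subst vx; simpa using hx.symm
    by_cases vy : v = σ⁻¹ y
    · subst vy; simpa using hy.symm
    have : σ' v = σ v := by
      rw [hs, Equiv.Perm.mul_apply, Equiv.swap_apply_of_ne_of_ne vx vy]
    rw [← this, sameCycle_apply_right]
  intro v w h
  obtain ⟨n, rfl⟩ := SameCycle.exists_nat_pow_eq h
  induction n with
  | zero => exact SameCycle.refl _ _
  | succ n ih =>
    rw [pow_succ', Equiv.Perm.mul_apply]
    exact (ih ⟨n, by simp⟩).trans (step _)

theorem ind_merge {V : Type*} [Fintype V] [DecidableEq V] (σ : Equiv.Perm V) (x y : V) (k : ℕ)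
    (hk : Big σ k) (hxy : ¬ σ.SameCycle x y) :
    (Ind σ k).ncard = (Ind (σ * Equiv.swap (σ⁻¹ x) (σ⁻¹ y) : Equiv.Perm V) k).ncard := by
  set σ' := σ * Equiv.swap (σ⁻¹ x) (σ⁻¹ y) with hs
  have hp := big_inj σ k hk x
  have hq := big_inj σ k hk y
  have hd : ∀ i j : ℕ, (σ ^ i) x ≠ (σ ^ j) y := by
    intro i j e
    apply hxy
    have h1 : σ.SameCycle x ((σ ^ i) x) := ⟨i, by simp⟩
    have h2 : σ.SameCycle y ((σ ^ j) y) := ⟨j, by simp⟩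
    rw [e] at h1
    exact h1.trans h2.symm
  have s1 : ∀ z, ∀ j : ℕ, σ ((σ ^ j) z) = (σ ^ (j+1)) z := fun z j => by
    rw [pow_succ', Equiv.Perm.mul_apply]
  have oth : ∀ u, u ≠ σ⁻¹ x → u ≠ σ⁻¹ y → σ' u = σ u := fun u h1 h2 => by
    rw [hs, Equiv.Perm.mul_apply, Equiv.swap_apply_of_ne_of_ne h1 h2]
  have inv : ∀ u z, u = σ⁻¹ z → σ u = z := by rintro _ z rfl; simp
  have sp : ∀ j < k, σ' ((σ ^ j) x) = (σ ^ (j+1)) x := by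
    intro j hj
    rw [oth, s1]
    · intro e
      have := inv _ _ e
      rw [s1] at this
      have := hp (j+1) (by omega) 0 (by omega) this
      omega
    · intro e
      have := inv _ _ e
      rw [s1] at this
      exact hd (j+1) 0 this
  have sq : ∀ j < k, σ' ((σ ^ j) y) = (σ ^ (j+1)) y := by
    intro j hj
    rw [oth, s1]
    · intro e
      have := inv _ _ e
      rw [s1] at this
      exact hd 0 (j+1) this.symm
    · intro e
      have := inv _ _ e
      rw [s1] at this
      have := hq (j+1) (by omega) 0 (by omega) this
      omega
  apply le_antisymm
  · exact ind_le σ σ' σ.injective (fun i => (σ ^ i) x) (fun i => (σ ^ i) y) k (σ⁻¹ x) (σ⁻¹ y)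
      hp hq (fun i _ j _ => hd i j) (fun j _ => s1 x j) (fun j _ => s1 y j) sp sq
      (by simp) (by simp) (by simp [hs]) (by simp [hs]) oth
  · exact ind_le σ' σ σ'.injective (fun i => (σ ^ i) x) (fun i => (σ ^ i) y) k (σ⁻¹ y) (σ⁻¹ x)
      hp hq (fun i _ j _ => hd i j) sp sq (fun j _ => s1 x j) (fun j _ => s1 y j)
      (by simp [hs]) (by simp [hs]) (by simp) (by simp) (fun u h1 h2 => (oth u h2 h1).symm)

theorem exists_single {V : Type*} [Fintype V] (k : ℕ) (x : V) (d : ℕ) :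
    ∀ σ : Equiv.Perm V, Big σ k → Fintype.card V - {w | σ.SameCycle x w}.ncard = d →
    ∃ σ' : Equiv.Perm V, (∀ w, σ'.SameCycle x w) ∧ (Ind σ k).ncard = (Ind σ' k).ncard := by
  classical
  induction d using Nat.strong_induction_on with
  | _ d ih =>
    intro σ hk hd
    by_cases hall : ∀ w, σ.SameCycle x w
    · exact ⟨σ, hall, rfl⟩
    push Not at hall
    obtain ⟨y, hy⟩ := hall
    obtain ⟨m1, m2⟩ := merge_same σ x y hy
    have m3 := ind_merge σ x y k hk hy
    set σ' := σ * Equiv.swap (σ⁻¹ x) (σ⁻¹ y) with hs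
    have hk' : Big σ' k := fun v =>
      (hk v).trans_le (Set.ncard_le_ncard (fun w hw => m2 v w hw) (Set.toFinite _))
    have lt : {w | σ.SameCycle x w}.ncard < {w | σ'.SameCycle x w}.ncard := by
      apply Set.ncard_lt_ncard _ (Set.toFinite _)
      refine ⟨fun w hw => m2 x w hw, fun h => hy (h m1)⟩
    have le : {w | σ'.SameCycle x w}.ncard ≤ Fintype.card V := by
      rw [← Nat.card_eq_fintype_card]; exact Set.ncard_le_card _
    obtain ⟨σ'', a, b⟩ := ih _ (by omega) σ' hk' rfl
    exact ⟨σ'', a, m3.trans b⟩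

theorem ind_transfer {V W : Type*} [Fintype V] [Fintype W] (σ : V → V) (ρ : W → W) (e : W ≃ V)
    (h : ∀ i, e (ρ i) = σ (e i)) (k : ℕ) : (Ind ρ k).ncard = (Ind σ k).ncard := by
  have : Ind σ k = (fun s : Finset W => s.map e.toEmbedding) '' Ind ρ k := by
    ext s
    simp only [Set.mem_image]
    constructor
    · rintro ⟨h1, h2⟩
      refine ⟨s.map e.symm.toEmbedding, ⟨by rw [Finset.card_map, h1], ?_⟩, ?_⟩
      · intro u hu
        rw [Finset.mem_map_equiv] at hu ⊢
        simp only [Equiv.symm_symm] at hu ⊢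
        rw [h]; exact h2 _ hu
      · ext z; simp
    · rintro ⟨t, ⟨h1, h2⟩, rfl⟩
      refine ⟨by rw [Finset.card_map, h1], ?_⟩
      intro u hu
      rw [Finset.mem_map_equiv] at hu ⊢
      have := h2 _ hu
      have e2 := h (e.symm u)
      rw [Equiv.apply_symm_apply] at e2
      rwa [← e2, Equiv.symm_apply_apply]
  rw [this, Set.ncard_image_of_injective _ (Finset.map_injective _)]

theorem ind_eq {V : Type*} (G : SimpleGraph V) (σ : V → V) (k : ℕ)
    (h : ∀ u v, G.Adj u v ↔ σ u = v ∨ σ v = u) :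
    {s : Finset V | s.card = k ∧ ∀ u ∈ s, ∀ v ∈ s, ¬ G.Adj u v} = Ind σ k := by
  ext s
  simp only [Ind, Set.mem_ofPred_eq, h]
  refine and_congr_right fun _ => ⟨fun H u hu hs => H u hu _ hs (Or.inl rfl), ?_⟩
  rintro H u hu v hv (rfl | rfl)
  · exact H _ hu hv
  · exact H _ hv hu

theorem single_eq {V : Type*} [Fintype V] (k m : ℕ) (hn : Fintype.card V = m + 2) (x : V)
    (σ : Equiv.Perm V) (h : ∀ w, σ.SameCycle x w) :
    (Ind σ k).ncard = (Ind (fun i : Fin (m + 2) => i + 1) k).ncard := by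
  have hc : σ.IsCycleOn ((Finset.univ : Finset V) : Set V) := by
    refine ⟨by simpa using σ.bijective, fun u _ v _ => (h u).symm.trans (h v)⟩
  have hpow : ∀ a b : ℕ, (σ ^ a) x = (σ ^ b) x ↔ a ≡ b [MOD m + 2] := by
    intro a b
    rw [hc.pow_apply_eq_pow_apply (Finset.mem_univ x), Finset.card_univ, hn]
  let f : Fin (m + 2) → V := fun i => (σ ^ (i : ℕ)) x
  have hf : Function.Injective f := by
    intro i j e
    have := (hpow i j).1 e
    rw [Nat.ModEq, Nat.mod_eq_of_lt i.2, Nat.mod_eq_of_lt j.2] at this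
    exact Fin.ext this
  have hb : Function.Bijective f := by
    rw [Fintype.bijective_iff_injective_and_card]
    exact ⟨hf, by simp [hn]⟩
  symm
  apply ind_transfer σ _ (Equiv.ofBijective f hb)
  intro i
  simp only [Equiv.ofBijective_apply, f]
  rw [← Equiv.Perm.mul_apply, ← pow_succ', hpow, Fin.val_add]
  simp [Nat.ModEq]

theorem cyc_adj (m : ℕ) (u v : Fin (m + 2)) :
    (cycleGraph (m + 2)).Adj u v ↔ u + 1 = v ∨ v + 1 = u := by
  rw [cycleGraph_adj, or_comm]
  constructor
  · rintro (h | h)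
    · left; rw [← h]; abel
    · right; rw [← h]; abel
  · rintro (h | h)
    · left; rw [← h]; abel
    · right; rw [← h]; abel

open scoped Fin.CommRing in
theorem comp_perm {V : Type*} (G : SimpleGraph V) (c : G.ConnectedComponent) (k m : ℕ)
    (hk : k < m) (hc : CompIsCycle G c m) :
    ∃ τ : Equiv.Perm c.supp, (∀ u v : c.supp, G.Adj u v ↔ τ u = v ∨ τ v = u) ∧
      (∀ u v : c.supp, ∃ n : ℕ, (τ ^ n) u = v) ∧ k < Nat.card c.supp := by
  obtain ⟨h3, ⟨φ⟩⟩ := hc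
  obtain ⟨m, rfl⟩ : ∃ m', m = m' + 2 := ⟨m - 2, by omega⟩
  let τ : Equiv.Perm c.supp := (φ.toEquiv.trans (Equiv.addRight 1)).trans φ.toEquiv.symm
  have hτ : ∀ u, φ (τ u) = φ u + 1 := by
    intro u
    exact φ.toEquiv.apply_symm_apply _
  have hτn : ∀ n : ℕ, ∀ u, φ ((τ ^ n) u) = φ u + (n : Fin (m + 2)) := by
    intro n u
    induction n with
    | zero => simp
    | succ n ih =>
      rw [pow_succ', Equiv.Perm.mul_apply, hτ, ih]
      push_cast
      abel
  refine ⟨τ, ?_, ?_, ?_⟩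
  · intro u v
    have : G.Adj u v ↔ (cycleGraph (m+2)).Adj (φ u) (φ v) := by
      rw [φ.map_adj_iff]; rfl
    rw [this, cyc_adj, ← hτ, ← hτ, φ.injective.eq_iff, φ.injective.eq_iff]
  · intro u v
    refine ⟨((φ v - φ u : Fin (m + 2)) : ℕ), φ.injective ?_⟩
    rw [hτn, Fin.cast_val_eq_self]
    abel
  · rw [Nat.card_congr φ.toEquiv]; simpa using hk

theorem exists_perm {V : Type*} [Fintype V] (k : ℕ) (G : SimpleGraph V)
    (hcyc : ∀ c : G.ConnectedComponent, ∃ m, k < m ∧ CompIsCycle G c m) :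
    ∃ σ : Equiv.Perm V, (∀ u v, G.Adj u v ↔ σ u = v ∨ σ v = u) ∧ Big σ k := by
  have h : ∀ c : G.ConnectedComponent, ∃ τ : Equiv.Perm c.supp,
      (∀ u v : c.supp, G.Adj u v ↔ τ u = v ∨ τ v = u) ∧
      (∀ u v : c.supp, ∃ n : ℕ, (τ ^ n) u = v) ∧ k < Nat.card c.supp := by
    intro c
    obtain ⟨m, hk, hc⟩ := hcyc c
    exact comp_perm G c k m hk hc
  choose τ h1 h2 h3 using h
  let f : V → V := fun v => τ (G.connectedComponentMk v) ⟨v, rfl⟩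
  have hf : ∀ c, ∀ u : c.supp, f u = τ c u := by
    rintro c ⟨u, hu⟩
    have : G.connectedComponentMk u = c := hu
    subst this
    rfl
  have hfc : ∀ u, G.connectedComponentMk (f u) = G.connectedComponentMk u :=
    fun u => (τ (G.connectedComponentMk u) ⟨u, rfl⟩).2
  have finj : Function.Injective f := by
    intro u v e
    have hc : G.connectedComponentMk u = G.connectedComponentMk v := by
      rw [← hfc u, ← hfc v, e]
    have e1 := hf (G.connectedComponentMk v) ⟨u, hc⟩
    have e2 := hf (G.connectedComponentMk v) ⟨v, rfl⟩
    simp only at e1 e2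
    rw [e, e2] at e1
    have := (τ _).injective (Subtype.ext e1)
    exact (congrArg Subtype.val this).symm
  let σ : Equiv.Perm V := Equiv.ofBijective f (Finite.injective_iff_bijective.1 finj)
  have hσ : ∀ u, σ u = f u := fun u => rfl
  have hσn : ∀ c, ∀ u : c.supp, ∀ n : ℕ, (σ ^ n) (u : V) = ((τ c ^ n) u : c.supp) := by
    intro c u n
    induction n with
    | zero => rfl
    | succ n ih => rw [pow_succ', pow_succ', Equiv.Perm.mul_apply, Equiv.Perm.mul_apply, ih, hσ, hf]
  refine ⟨σ, ?_, ?_⟩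
  · intro u v
    rw [hσ, hσ]
    by_cases hc : G.connectedComponentMk u = G.connectedComponentMk v
    · have := h1 (G.connectedComponentMk v) ⟨u, hc⟩ ⟨v, rfl⟩
      rw [Subtype.ext_iff, Subtype.ext_iff, ← hf, ← hf] at this
      exact this
    · constructor
      · intro h; exact absurd (ConnectedComponent.sound h.reachable) hc
      · rintro (h | h)
        · exact absurd (by rw [← h, hfc]) hc
        · exact absurd (by rw [← h, hfc]) hc
  · intro v
    refine (h3 (G.connectedComponentMk v)).trans_le ?_
    rw [Nat.card_coe_set_eq]
    apply Set.ncard_le_ncard _ (Set.toFinite _)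
    intro w hw
    obtain ⟨n, hn⟩ := h2 (G.connectedComponentMk v) ⟨v, rfl⟩ ⟨w, hw⟩
    refine ⟨n, ?_⟩
    rw [zpow_natCast]
    have := hσn (G.connectedComponentMk v) ⟨v, rfl⟩ n
    rw [hn] at this
    exact this

end Stmt14

/-- If `G` is a 2-regular graph with `n` vertices all of whose components
are cycles with more than `k` vertices, then the number of `k`-element independent sets
of `G` equals that of `C_n`; in particular it depends only on `k` and `n`. -/
theorem stmt_14 {V : Type*} [Fintype V] (k n : ℕ)
    (G : SimpleGraph V) (hn : Fintype.card V = n)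
    (hreg : ∀ v, (G.neighborSet v).ncard = 2)
    (hcyc : ∀ c : G.ConnectedComponent, ∃ m, k < m ∧ CompIsCycle G c m) :
    Set.ncard {s : Finset V | s.card = k ∧ ∀ u ∈ s, ∀ v ∈ s, ¬ G.Adj u v} =
    Set.ncard {s : Finset (Fin n) | s.card = k ∧ ∀ u ∈ s, ∀ v ∈ s, ¬ (cycleGraph n).Adj u v}
    := by 
  obtain ⟨σ, hadj, hbig⟩ := Stmt14.exists_perm k G hcyc
  rw [Stmt14.ind_eq G σ k hadj]
  rcases isEmpty_or_nonempty V with hV | ⟨⟨x⟩⟩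
  · have h0 : n = 0 := by rw [← hn]; exact Fintype.card_eq_zero
    subst h0
    rw [Stmt14.ind_eq (cycleGraph 0) id k (fun u => u.elim0)]
    exact Stmt14.ind_transfer id σ (Equiv.equivOfIsEmpty V (Fin 0)) (fun i => isEmptyElim i) k
  · obtain ⟨m, hm⟩ : ∃ m, n = m + 2 := by
      obtain ⟨m, _, h3, ⟨φ⟩⟩ := hcyc (G.connectedComponentMk x)
      have h1 := Nat.card_congr φ.toEquiv
      have h2 : Nat.card (G.connectedComponentMk x).supp ≤ Nat.card V :=
        Nat.card_le_card_of_injective _ Subtype.val_injective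
      rw [h1, Nat.card_eq_fintype_card, Nat.card_eq_fintype_card, hn, Fintype.card_fin] at h2
      exact ⟨n - 2, by omega⟩
    subst hm
    obtain ⟨σ', ha, hb⟩ := Stmt14.exists_single k x _ σ hbig rfl
    rw [hb, Stmt14.ind_eq (cycleGraph (m + 2)) (fun i => i + 1) k (Stmt14.cyc_adj m)]
    exact Stmt14.single_eq k m hn x σ' ha
end

section
/- Let G be a finite simple graph with maximum degree at most 2, and let k ≥ 3. Then the number of connected components of G that are paths with at least k−1 vertices equals s(G, P_{k−1}) − s(G, P_k) − k·s(G, C_k). -/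
open SimpleGraph

def D2 {V : Type*} (G : SimpleGraph V) : Prop :=
  ∀ v a b c, G.Adj v a → G.Adj v b → G.Adj v c → a ≠ b → c = a ∨ c = b

theorem D2_of_ncard {V : Type*} [Finite V] (G : SimpleGraph V)
    (hdeg : ∀ v, (G.neighborSet v).ncard ≤ 2) : D2 G := by
  intro v a b c ha hb hc hab
  by_contra! h
  have h3 : ({a, b, c} : Set V).ncard = 3 :=
    Set.ncard_eq_three.mpr ⟨a, b, c, hab, h.1.symm, h.2.symm, rfl⟩
  have hs : ({a, b, c} : Set V) ⊆ G.neighborSet v := by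
    rintro x (rfl | rfl | rfl) <;> assumption
  have := Set.ncard_le_ncard hs (Set.toFinite _)
  have := hdeg v
  omega

theorem uniq {V : Type*} {G : SimpleGraph V} (hG : D2 G) {n : ℕ} (f g : Fin (n + 2) → V)
    (fi : Function.Injective f) (gi : Function.Injective g)
    (hf : ∀ i j : Fin (n + 2), i.val + 1 = j.val → G.Adj (f i) (f j))
    (hg : ∀ i j : Fin (n + 2), i.val + 1 = j.val → G.Adj (g i) (g j))
    (h0 : f 0 = g 0) (h1 : f 1 = g 1) : f = g := by
  have key : ∀ i : ℕ, ∀ h : i + 1 < n + 2, f ⟨i, by omega⟩ = g ⟨i, by omega⟩ ∧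
      f ⟨i + 1, h⟩ = g ⟨i + 1, h⟩ := by
    intro i
    induction i with
    | zero => intro h; exact ⟨h0, h1⟩
    | succ i ih =>
      intro h
      obtain ⟨ha, hb⟩ := ih (by omega)
      refine ⟨hb, ?_⟩
      have h1 := (hf ⟨i, by omega⟩ ⟨i + 1, by omega⟩ rfl).symm
      have h2 := hf ⟨i + 1, by omega⟩ ⟨i + 1 + 1, by omega⟩ rfl
      have h3 := hg ⟨i + 1, by omega⟩ ⟨i + 1 + 1, by omega⟩ rfl
      rw [← hb] at h3
      have hne : f ⟨i, by omega⟩ ≠ f ⟨i + 1 + 1, by omega⟩ := by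
        intro h; have := fi h; simp at this; omega
      rcases hG _ _ _ _ h1 h2 h3 hne with h | h
      · rw [ha] at h
        have := gi h; simp at this; omega
      · exact h.symm
  funext ⟨i, hi⟩
  rcases Nat.eq_zero_or_pos i with rfl | hp
  · exact h0
  · obtain ⟨j, rfl⟩ : ∃ j, i = j + 1 := ⟨i - 1, by omega⟩
    exact (key j hi).2

theorem D2_path (n : ℕ) : D2 (pathGraph n) := by
  intro v a b c ha hb hc hab
  rw [pathGraph_adj] at *
  rw [Fin.ext_iff, Fin.ext_iff] at *
  rw [ne_eq, Fin.ext_iff] at hab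
  omega

theorem cyc_adj {n : ℕ} (u v : Fin (n + 3)) : (cycleGraph (n + 3)).Adj u v ↔
    (u.val + 1 = v.val ∨ v.val + 1 = u.val ∨ (u.val = 0 ∧ v.val = n + 2) ∨
      (v.val = 0 ∧ u.val = n + 2)) := by
  rw [cycleGraph_adj']
  rcases le_total u v with h | h
  · rcases eq_or_lt_of_le h with rfl | h'
    · have h0 : (u - u).val = 0 := by simp
      omega
    · have := Fin.coe_sub_iff_le.2 h
      have := Fin.coe_sub_iff_lt.2 h'
      rw [Fin.lt_def] at h'
      omega
  · rcases eq_or_lt_of_le h with rfl | h'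
    · have h0 : (v - v).val = 0 := by simp
      omega
    · have := Fin.coe_sub_iff_le.2 h
      have := Fin.coe_sub_iff_lt.2 h'
      rw [Fin.lt_def] at h'
      omega

theorem D2_cyc (n : ℕ) : D2 (cycleGraph (n + 3)) := by
  intro v a b c ha hb hc hab
  rw [cyc_adj] at *
  rw [Fin.ext_iff, Fin.ext_iff]
  rw [ne_eq, Fin.ext_iff] at hab
  omega

/-- The reversal of a path. -/
def revIso (n : ℕ) : pathGraph n ≃g pathGraph n where
  toEquiv := Fin.revPerm
  map_rel_iff' := by
    intro a b
    simp only [Fin.revPerm_apply, pathGraph_adj, Fin.val_rev]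
    omega

theorem uniqP {V : Type*} {G : SimpleGraph V} (hG : D2 G) {n : ℕ} (f g : pathGraph (n + 2) ↪g G)
    (h0 : f 0 = g 0) (hd : ∀ w, G.Adj (f 0) w → w = f 1) : f = g := by
  apply DFunLike.coe_injective
  refine uniq hG f g f.injective g.injective ?_ ?_ h0 ?_
  · intro i j h; exact f.map_rel_iff.2 (pathGraph_adj.2 (Or.inl h))
  · intro i j h; exact g.map_rel_iff.2 (pathGraph_adj.2 (Or.inl h))
  · symm
    apply hd
    rw [h0]
    exact g.map_rel_iff.2 (pathGraph_adj.2 (Or.inl (by simp)))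

theorem autP (n : ℕ) : Nat.card (pathGraph (n + 2) ≃g pathGraph (n + 2)) = 2 := by
  rw [Nat.card_eq_two_iff]
  refine ⟨RelIso.refl _, revIso _, ?_, ?_⟩
  · intro h
    have := DFunLike.congr_fun h 0
    simp [revIso, Fin.ext_iff] at this
  · rw [Set.eq_univ_iff_forall]
    intro φ
    have hd : ∀ w, (pathGraph (n + 2)).Adj 0 w → w = 1 := by
      intro w hw
      rw [pathGraph_adj] at hw
      rw [Fin.ext_iff]; simp at hw ⊢; omega
    have hφ : ∀ w, (pathGraph (n + 2)).Adj (φ 0) w → w = φ 1 := by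
      intro w hw
      have : (pathGraph (n + 2)).Adj 0 (φ.symm w) := by
        rw [← φ.map_rel_iff]; simpa using hw
      have := hd _ this
      rw [← this]; simp
    have h0 : φ 0 = 0 ∨ φ 0 = Fin.last _ := by
      by_contra! h
      rw [ne_eq, ne_eq, Fin.ext_iff, Fin.ext_iff] at h
      simp only [Fin.val_zero, Fin.val_last] at h
      have l := (φ 0).isLt
      have a := hφ ⟨(φ 0).val + 1, by omega⟩ (pathGraph_adj.2 (Or.inl rfl))
      have b := hφ ⟨(φ 0).val - 1, by omega⟩ (pathGraph_adj.2 (Or.inr (by simp; omega)))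
      rw [← a, Fin.ext_iff] at b
      simp at b
    have key : ∀ ψ : pathGraph (n + 2) ≃g pathGraph (n + 2), φ 0 = ψ 0 → φ = ψ := by
      intro ψ h
      have := uniqP (D2_path (n + 2)) φ.toRelEmbedding ψ.toRelEmbedding h hφ
      ext x
      exact congrArg Fin.val (DFunLike.congr_fun this x)
    rcases h0 with h | h
    · left; exact key _ h
    · right; apply key; rw [h]; simp [revIso]

/-- Rotations and reflections of the cycle. -/
def dih (n : ℕ) (p : Fin (n + 3) × Bool) : cycleGraph (n + 3) ≃g cycleGraph (n + 3) where
  toEquiv := if p.2 then Equiv.addLeft p.1 else Equiv.subLeft p.1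
  map_rel_iff' := by
    intro a b
    rcases p with ⟨p, _ | _⟩
    · simp [cycleGraph_adj', or_comm]
    · simp [cycleGraph_adj']

theorem autC (n : ℕ) : Nat.card (cycleGraph (n + 3) ≃g cycleGraph (n + 3)) = 2 * (n + 3) := by
  have hb : Function.Bijective (dih n) := by
    constructor
    · rintro ⟨a, s⟩ ⟨b, t⟩ h
      have h0 := DFunLike.congr_fun h 0
      have h1 := DFunLike.congr_fun h 1
      have hab : a = b := by
        cases s <;> cases t <;> simpa [dih] using h0
      subst hab
      have h2 : (1 : Fin (n + 3)) ≠ -1 := by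
        intro h
        have : (1 : Fin (n + 3)) + 1 = 0 := by nth_rewrite 2 [h]; simp
        rw [Fin.ext_iff, Fin.val_add] at this
        simp at this
        rw [Nat.mod_eq_of_lt (by omega)] at this
        omega
      cases s <;> cases t <;> simp [dih, sub_eq_add_neg, h2, h2.symm] at h1 ⊢
    · intro φ
      have h1 : (cycleGraph (n + 3)).Adj (φ 0) (φ 1) := by
        rw [φ.map_rel_iff, cyc_adj]; simp
      have key : ∀ ψ : cycleGraph (n + 3) ≃g cycleGraph (n + 3), φ 0 = ψ 0 → φ 1 = ψ 1 → φ = ψ := by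
        intro ψ h h'
        apply DFunLike.coe_injective
        refine uniq (D2_cyc n) φ ψ φ.injective ψ.injective ?_ ?_ h h'
        · intro i j h; rw [φ.map_rel_iff, cyc_adj]; left; exact h
        · intro i j h; rw [ψ.map_rel_iff, cyc_adj]; left; exact h
      rw [cycleGraph_adj] at h1
      rcases h1 with h1 | h1
      · refine ⟨(φ 0, false), (key _ ?_ ?_).symm⟩
        · simp [dih]
        · have h2 : φ 1 = φ 0 - 1 := by rw [sub_eq_iff_eq_add.1 h1]; simp
          simp [dih, h2]
      · refine ⟨(φ 0, true), (key _ ?_ ?_).symm⟩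
        · simp [dih]
        · have h2 : φ 1 = φ 0 + 1 := by rw [sub_eq_iff_eq_add.1 h1]; exact add_comm _ _
          simp [dih, h2]
  rw [← Nat.card_eq_of_bijective _ hb]
  simp [mul_comm]


theorem card_emb_s16 {V W : Type*} [Fintype V] [Finite W] (G : SimpleGraph V) (H : SimpleGraph W) :
    Nat.card (H ↪g G) = copies G H * Nat.card (H ≃g H) := by
  classical
  let S := {s : Finset V | Nonempty ((G.induce (↑s : Set V)) ≃g H)}
  let T := Σ s : S, (H ≃g G.induce (↑s.1 : Set V))
  let F : T → (H ↪g G) := fun p => (Embedding.induce _).comp p.2.toEmbedding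
  have hF : ∀ (p : T) x, F p x = (p.2 x : V) := fun p x => rfl
  have hr : ∀ p : T, Set.range (F p) = (↑p.1.1 : Set V) := by
    intro p
    ext v
    constructor
    · rintro ⟨x, rfl⟩
      rw [hF]; exact (p.2 x).2
    · intro hv
      refine ⟨p.2.symm ⟨v, hv⟩, ?_⟩
      rw [hF]; simp
  have hb : Function.Bijective F := by
    constructor
    · intro p q h
      have h1 : p.1 = q.1 := by
        apply Subtype.ext
        apply Finset.coe_injective
        rw [← hr p, ← hr q, h]
      obtain ⟨s, e⟩ := p
      obtain ⟨s', e'⟩ := q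
      dsimp only at h1
      subst h1
      congr 1
      ext x
      exact DFunLike.congr_fun h x
    · intro f
      let s : Finset V := (Set.toFinite (Set.range f)).toFinset
      have hs : (↑s : Set V) = Set.range f := Set.Finite.coe_toFinset _
      let e : H ≃g G.induce (↑s : Set V) :=
        { toEquiv := (Equiv.ofInjective f f.injective).trans (Equiv.setCongr hs.symm)
          map_rel_iff' := by intro a b; exact f.map_rel_iff }
      refine ⟨⟨⟨s, ⟨e.symm⟩⟩, e⟩, ?_⟩
      ext x
      rfl
  rw [← Nat.card_eq_of_bijective _ hb]
  have hfin : ∀ s : S, Nat.card (H ≃g G.induce (↑s.1 : Set V)) = Nat.card (H ≃g H) := by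
    intro s
    obtain ⟨e⟩ := s.2
    exact Nat.card_congr
      { toFun := fun a => a.trans e
        invFun := fun a => a.trans e.symm
        left_inv := by intro a; ext x; simp
        right_inv := by intro a; ext x; simp }
  have : ∀ s : S, Finite (H ≃g G.induce (↑s.1 : Set V)) := fun s =>
    Finite.of_injective (fun e => (e : W → _)) DFunLike.coe_injective
  rw [Nat.card_sigma]
  simp only [hfin]
  rw [Finset.sum_const, smul_eq_mul, Finset.card_univ, ← Nat.card_eq_fintype_card]
  rfl

theorem ext_lemma {V : Type*} {G : SimpleGraph V} (hG : D2 G) {n : ℕ}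
    (f : pathGraph (n + 2) ↪g G) (w : V) (h0 : G.Adj (f 0) w) (h1 : w ≠ f 1) :
    (∃ g : pathGraph (n + 3) ↪g G, g 0 = w ∧ ∀ i, g (Fin.succ i) = f i) ∨
    (∃ g : cycleGraph (n + 3) ↪g G, g 0 = w ∧ ∀ i, g (Fin.succ i) = f i) := by
  have hA : ∀ i j, G.Adj (f i) (f j) ↔ i.val + 1 = j.val ∨ j.val + 1 = i.val := by
    intro i j; rw [f.map_rel_iff, pathGraph_adj]
  have hw : ∀ i, w ≠ f i := by
    rintro i rfl
    rw [hA] at h0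
    apply h1
    congr 1
    rw [Fin.ext_iff]; simp at h0 ⊢; omega
  have hin : ∀ i, G.Adj (f i) w → i.val = 0 ∨ i.val = n + 1 := by
    intro i hi
    by_contra! h
    have l := i.isLt
    have a := (hA i ⟨i.val - 1, by omega⟩).2 (by simp; omega)
    have b := (hA i ⟨i.val + 1, by omega⟩).2 (by simp)
    rcases hG _ _ _ _ a b hi (by intro h; have := congrArg Fin.val (f.injective h); simp at this)
      with h | h
    · exact hw _ h
    · exact hw _ h
  have hin0 : ∀ i, i.val = 0 → G.Adj (f i) w := by
    intro i hi
    have : i = 0 := by rw [Fin.ext_iff]; simpa using hi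
    rw [this]; exact h0
  let c : Fin (n + 3) → V := Fin.cons w f
  have ci : Function.Injective c := by
    apply Fin.cons_injective_iff.2
    refine ⟨?_, f.injective⟩
    rintro ⟨i, hi⟩
    exact hw i hi.symm
  have c0 : c 0 = w := rfl
  have cs : ∀ i, c (Fin.succ i) = f i := fun i => rfl
  by_cases hl : G.Adj (f (Fin.last _)) w
  · right
    have hl' : ∀ i, i.val = n + 1 → G.Adj (f i) w := by
      intro i hi
      have : i = Fin.last _ := by rw [Fin.ext_iff]; simpa using hi
      rw [this]; exact hl
    refine ⟨⟨⟨c, ci⟩, ?_⟩, c0, cs⟩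
    intro a b
    rw [cyc_adj]
    change G.Adj (c a) (c b) ↔ _
    induction a using Fin.cases with
    | zero =>
      induction b using Fin.cases with
      | zero => simp
      | succ b =>
        rw [c0, cs, G.adj_comm]
        have := hin b; have := hin0 b; have := hl' b
        simp [-Fin.val_eq_zero_iff]
        tauto
    | succ a =>
      induction b using Fin.cases with
      | zero =>
        rw [c0, cs]
        have := hin a; have := hin0 a; have := hl' a
        simp [-Fin.val_eq_zero_iff]
        tauto
      | succ b =>
        rw [cs, cs, hA]
        simp
  · left
    have hl' : ∀ i, G.Adj (f i) w → i.val ≠ n + 1 := by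
      intro i hi hi'
      have : i = Fin.last _ := by rw [Fin.ext_iff]; simpa using hi'
      rw [this] at hi; exact hl hi
    refine ⟨⟨⟨c, ci⟩, ?_⟩, c0, cs⟩
    intro a b
    rw [pathGraph_adj]
    change G.Adj (c a) (c b) ↔ _
    induction a using Fin.cases with
    | zero =>
      induction b using Fin.cases with
      | zero => simp
      | succ b =>
        rw [c0, cs, G.adj_comm]
        have := hin b; have := hin0 b; have := hl' b
        simp [-Fin.val_eq_zero_iff]
        tauto
    | succ a =>
      induction b using Fin.cases with
      | zero =>
        rw [c0, cs]
        have := hin a; have := hin0 a; have := hl' a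
        simp [-Fin.val_eq_zero_iff]
        tauto
      | succ b =>
        rw [cs, cs, hA]
        simp

/-- Path embedded in path by successor. -/
def sP (n : ℕ) : pathGraph (n + 2) ↪g pathGraph (n + 3) where
  toFun := Fin.succ
  inj' := Fin.succ_injective _
  map_rel_iff' := by
    intro a b
    simp [pathGraph_adj]

/-- Path embedded in cycle by successor. -/
def sC (n : ℕ) : pathGraph (n + 2) ↪g cycleGraph (n + 3) where
  toFun := Fin.succ
  inj' := Fin.succ_injective _
  map_rel_iff' := by
    intro a b
    simp [pathGraph_adj, cyc_adj]

theorem count4 {V : Type*} [Finite V] {G : SimpleGraph V} (hG : D2 G) (n : ℕ) :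
    Nat.card (pathGraph (n + 2) ↪g G) = Nat.card (pathGraph (n + 3) ↪g G) +
      Nat.card (cycleGraph (n + 3) ↪g G) +
      Nat.card {f : pathGraph (n + 2) ↪g G // ∀ w, G.Adj (f 0) w → w = f 1} := by
  have fin1 : ∀ m, Finite (pathGraph m ↪g G) := fun m =>
    Finite.of_injective (fun e => (e : _ → V)) DFunLike.coe_injective
  have fin2 : ∀ m, Finite (cycleGraph m ↪g G) := fun m =>
    Finite.of_injective (fun e => (e : _ → V)) DFunLike.coe_injective
  rw [← Nat.card_sum, ← Nat.card_sum]
  let F : ((pathGraph (n + 3) ↪g G) ⊕ (cycleGraph (n + 3) ↪g G)) ⊕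
      {f : pathGraph (n + 2) ↪g G // ∀ w, G.Adj (f 0) w → w = f 1} → (pathGraph (n + 2) ↪g G) :=
    Sum.elim (Sum.elim (fun g => g.comp (sP n)) (fun g => g.comp (sC n))) (fun f => f.1)
  symm
  apply Nat.card_eq_of_bijective F
  have two_mod : 2 % (n + 3) = 2 := Nat.mod_eq_of_lt (by omega)
  have pa : ∀ g : pathGraph (n + 3) ↪g G, G.Adj (g 1) (g 0) ∧ g 0 ≠ g 2 ∧ G.Adj (g 1) (g 2) := by
    intro g
    refine ⟨?_, ?_, ?_⟩
    · rw [g.map_rel_iff, pathGraph_adj]; simp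
    · intro h; have := congrArg Fin.val (g.injective h); simp [two_mod] at this
    · rw [g.map_rel_iff, pathGraph_adj]; simp [two_mod]
  have ca : ∀ g : cycleGraph (n + 3) ↪g G, G.Adj (g 1) (g 0) ∧ g 0 ≠ g 2 ∧ G.Adj (g 1) (g 2) := by
    intro g
    refine ⟨?_, ?_, ?_⟩
    · rw [g.map_rel_iff, cyc_adj]; simp
    · intro h; have := congrArg Fin.val (g.injective h); simp [two_mod] at this
    · rw [g.map_rel_iff, cyc_adj]; simp [two_mod]
  have same : ∀ g h : Fin (n + 3) → V, (G.Adj (g 1) (g 0) ∧ g 0 ≠ g 2 ∧ G.Adj (g 1) (g 2)) →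
      (G.Adj (h 1) (h 0) ∧ h 0 ≠ h 2 ∧ G.Adj (h 1) (h 2)) →
      (∀ i : Fin (n + 2), g i.succ = h i.succ) → g = h := by
    intro g h hg hh e
    have e1 : g 1 = h 1 := e 0
    have e2 : g 2 = h 2 := e 1
    rw [← e1, ← e2] at hh
    funext i
    induction i using Fin.cases with
    | zero =>
      rcases hG _ _ _ _ hg.1 hg.2.2 hh.1 hg.2.1 with h | h
      · exact h.symm
      · exact absurd h hh.2.1
    | succ i => exact e i
  have pc : ∀ (g : pathGraph (n + 3) ↪g G) (h : cycleGraph (n + 3) ↪g G), (g : _ → V) ≠ h := by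
    intro g h e
    have h1 : G.Adj (h 0) (h (Fin.last _)) := by
      rw [h.map_rel_iff, cyc_adj]; simp
    rw [← e, g.map_rel_iff, pathGraph_adj] at h1
    simp at h1
  constructor
  · rintro ((g | g) | g) ((h | h) | h) e
    · congr 2
      exact DFunLike.coe_injective (same g h (pa g) (pa h) (fun i => DFunLike.congr_fun e i))
    · exact absurd (same g h (pa g) (ca h) (fun i => DFunLike.congr_fun e i)) (pc g h)
    · exfalso
      have e' : ∀ i : Fin (n + 2), g i.succ = h.1 i := fun i => DFunLike.congr_fun e i
      have := h.2 (g 0) (by rw [← e']; exact (pa g).1)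
      rw [← e'] at this
      exact (pa g).2.1 this
    · exact absurd (same h g (pa h) (ca g) (fun i => (DFunLike.congr_fun e i).symm)) (pc h g)
    · congr 2
      exact DFunLike.coe_injective (same g h (ca g) (ca h) (fun i => DFunLike.congr_fun e i))
    · exfalso
      have e' : ∀ i : Fin (n + 2), g i.succ = h.1 i := fun i => DFunLike.congr_fun e i
      have := h.2 (g 0) (by rw [← e']; exact (ca g).1)
      rw [← e'] at this
      exact (ca g).2.1 this
    · exfalso
      have e' : ∀ i : Fin (n + 2), h i.succ = g.1 i := fun i => (DFunLike.congr_fun e i).symm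
      have := g.2 (h 0) (by rw [← e']; exact (pa h).1)
      rw [← e'] at this
      exact (pa h).2.1 this
    · exfalso
      have e' : ∀ i : Fin (n + 2), h i.succ = g.1 i := fun i => (DFunLike.congr_fun e i).symm
      have := g.2 (h 0) (by rw [← e']; exact (ca h).1)
      rw [← e'] at this
      exact (ca h).2.1 this
    · congr 1
      exact Subtype.ext e
  · intro f
    by_cases hd : ∀ w, G.Adj (f 0) w → w = f 1
    · exact ⟨Sum.inr ⟨f, hd⟩, rfl⟩
    · push Not at hd
      obtain ⟨w, h0, h1⟩ := hd
      rcases ext_lemma hG f w h0 h1 with ⟨g, -, hg⟩ | ⟨g, -, hg⟩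
      · refine ⟨Sum.inl (Sum.inl g), ?_⟩
        ext i; exact hg i
      · refine ⟨Sum.inl (Sum.inr g), ?_⟩
        ext i; exact hg i

/-- Last vertex is a dead end. -/
def DL {V : Type*} (G : SimpleGraph V) {n : ℕ} (f : pathGraph (n + 2) ↪g G) : Prop :=
  ∀ w, G.Adj (f (Fin.last _)) w → w = f ⟨n, by omega⟩

theorem cardDL {V : Type*} (G : SimpleGraph V) (n : ℕ) :
    Nat.card {f : pathGraph (n + 2) ↪g G // ∀ w, G.Adj (f 0) w → w = f 1} =
    Nat.card {f : pathGraph (n + 2) ↪g G // DL G f} := by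
  let E : (pathGraph (n + 2) ↪g G) ≃ (pathGraph (n + 2) ↪g G) :=
    { toFun := fun f => f.comp (revIso _).toEmbedding
      invFun := fun f => f.comp (revIso _).toEmbedding
      left_inv := by intro f; ext x; simp [revIso]
      right_inv := by intro f; ext x; simp [revIso] }
  apply Nat.card_congr
  refine E.subtypeEquiv ?_
  intro f
  have h0 : E f (Fin.last _) = f 0 := by
    change f (Fin.rev _) = _; simp
  have h1 : E f ⟨n, by omega⟩ = f 1 := by
    change f (Fin.rev _) = _; congr 1; rw [Fin.ext_iff]; simp [Fin.val_rev]
  rw [DL, h0, h1]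

theorem uniqDL {V : Type*} {G : SimpleGraph V} (hG : D2 G) {n : ℕ} (f g : pathGraph (n + 2) ↪g G)
    (h0 : f (Fin.last _) = g (Fin.last _)) (hd : DL G f) : f = g := by
  have h1 : ∀ f : pathGraph (n + 2) ↪g G, (f.comp (revIso _).toEmbedding) 0 = f (Fin.last _) := by
    intro f
    change f (Fin.rev _) = _; simp
  have h2 : (f.comp (revIso _).toEmbedding) 1 = f ⟨n, by omega⟩ := by
    change f (Fin.rev _) = _; congr 1
  have := uniqP hG (f.comp (revIso _).toEmbedding) (g.comp (revIso _).toEmbedding)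
    (by rw [h1, h1, h0]) (by rw [h1, h2]; exact hd)
  ext x
  have := DFunLike.congr_fun this (Fin.rev x)
  simpa [revIso] using this

theorem maxext {V : Type*} [Finite V] {G : SimpleGraph V} (hG : D2 G) (d : ℕ) : ∀ (n : ℕ)
    (f : pathGraph (n + 2) ↪g G), DL G f → Nat.card V ≤ n + d →
    ∃ (m : ℕ) (g : pathGraph (m + 2) ↪g G), n ≤ m ∧ DL G g ∧ (∀ w, G.Adj (g 0) w → w = g 1) ∧
      ∀ (i : Fin (n + 2)) (j : Fin (m + 2)), j.val + n = i.val + m → g j = f i := by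
  induction d with
  | zero =>
    intro n f _ hc
    have := Nat.card_le_card_of_injective f f.injective
    simp at this
    omega
  | succ d ih =>
    intro n f hf hc
    by_cases hd : ∀ w, G.Adj (f 0) w → w = f 1
    · refine ⟨n, f, le_rfl, hf, hd, ?_⟩
      intro i j h
      congr 1
      rw [Fin.ext_iff]; omega
    · push Not at hd
      obtain ⟨w, h0, h1⟩ := hd
      rcases ext_lemma hG f w h0 h1 with ⟨g, hg0, hg⟩ | ⟨g, hg0, hg⟩
      · have hgl : DL (n := n + 1) G g := by
          have a : g (Fin.last _) = f (Fin.last _) := by rw [← hg, Fin.succ_last]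
          have b : g ⟨n + 1, by omega⟩ = f ⟨n, by omega⟩ := by rw [← hg]; rfl
          intro w hw
          rw [b]
          apply hf
          rw [← a]; exact hw
        obtain ⟨m, G', hm, h1, h2, h3⟩ := ih (n + 1) g hgl (by omega)
        refine ⟨m, G', by omega, h1, h2, ?_⟩
        intro i j hij
        rw [← hg]
        apply h3
        simp only [Fin.val_succ]; omega
      · exfalso
        have hw : ∀ i, w ≠ f i := by
          intro i h
          rw [← hg0, ← hg] at h
          exact (Fin.succ_ne_zero i) (g.injective h).symm
        refine hw _ (hf w ?_)
        rw [← hg, ← hg0, g.map_rel_iff, cyc_adj]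
        simp

theorem closed_comp {V : Type*} {G : SimpleGraph V} (hG : D2 G) {m : ℕ} (g : pathGraph (m + 2) ↪g G)
    (h1 : DL G g) (h0 : ∀ w, G.Adj (g 0) w → w = g 1) (i₀ : Fin (m + 2)) :
    (G.connectedComponentMk (g i₀)).supp = Set.range g := by
  have hA : ∀ i j, G.Adj (g i) (g j) ↔ i.val + 1 = j.val ∨ j.val + 1 = i.val := by
    intro i j; rw [g.map_rel_iff, pathGraph_adj]
  have step : ∀ i w, G.Adj (g i) w → w ∈ Set.range g := by
    intro i w hw
    have l := i.isLt
    by_cases hi0 : i.val = 0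
    · have : i = 0 := by rw [Fin.ext_iff]; simpa using hi0
      subst this
      exact ⟨1, (h0 w hw).symm⟩
    by_cases hil : i.val = m + 1
    · have : i = Fin.last _ := by rw [Fin.ext_iff]; simpa using hil
      subst this
      exact ⟨_, (h1 w hw).symm⟩
    have a := (hA i ⟨i.val - 1, by omega⟩).2 (by simp; omega)
    have b := (hA i ⟨i.val + 1, by omega⟩).2 (by simp)
    rcases hG _ _ _ _ a b hw (by intro h; have := congrArg Fin.val (g.injective h); simp at this)
      with h | h
    · exact ⟨_, h.symm⟩
    · exact ⟨_, h.symm⟩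
  ext v
  rw [ConnectedComponent.mem_supp_iff, ConnectedComponent.eq]
  constructor
  · intro h
    obtain ⟨p⟩ := h.symm
    have : ∀ (a b : V), G.Walk a b → a ∈ Set.range g → b ∈ Set.range g := by
      intro a b p
      induction p with
      | nil => exact id
      | cons hadj _ ih =>
        rintro ⟨i, rfl⟩
        exact ih (step i _ hadj)
    exact this _ _ p ⟨i₀, rfl⟩
  · rintro ⟨i, rfl⟩
    have hc : (pathGraph (m + 2)).Reachable i i₀ := pathGraph_preconnected _ i i₀
    exact hc.map g.toHom

/-- Suffix embedding of paths. -/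
def suf (n m : ℕ) (h : n ≤ m) : pathGraph n ↪g pathGraph m where
  toFun := fun i => ⟨i.val + (m - n), by omega⟩
  inj' := by
    intro a b h
    rw [Fin.ext_iff] at h ⊢
    simpa using h
  map_rel_iff' := by
    intro a b
    change (pathGraph m).Adj ⟨_, _⟩ ⟨_, _⟩ ↔ _
    simp only [pathGraph_adj]
    omega

theorem comp_step {V : Type*} {G : SimpleGraph V} (c : G.ConnectedComponent) {m : ℕ}
    (e : pathGraph m ≃g G.induce c.supp) (i : Fin m) (w : V) (hw : G.Adj (e i : V) w) :
    ∃ j, w = e j ∧ (i.val + 1 = j.val ∨ j.val + 1 = i.val) := by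
  have hc : w ∈ c.supp := ConnectedComponent.mem_supp_of_adj_mem_supp c (e i).2 hw
  refine ⟨e.symm ⟨w, hc⟩, by simp, ?_⟩
  rw [← pathGraph_adj, ← e.map_rel_iff]
  simpa using hw

theorem count5 {V : Type*} [Finite V] {G : SimpleGraph V} (hG : D2 G) (n : ℕ) :
    Nat.card {f : pathGraph (n + 2) ↪g G // DL G f} =
      2 * Set.ncard {c : G.ConnectedComponent | ∃ m, n + 2 ≤ m ∧ CompIsPath G c m} := by
  classical
  have : Fintype V := Fintype.ofFinite V
  let S := {c : G.ConnectedComponent | ∃ m, n + 2 ≤ m ∧ CompIsPath G c m}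
  have : Fintype S := Fintype.ofFinite S
  have hS : ∀ c : S, ∃ m, Nat.card c.1.supp = m + 2 ∧ n ≤ m ∧
      Nonempty ((G.induce c.1.supp) ≃g pathGraph (m + 2)) := by
    rintro ⟨c, m, hm, ⟨e⟩⟩
    obtain ⟨m, rfl⟩ : ∃ k, m = k + 2 := ⟨m - 2, by omega⟩
    refine ⟨m, ?_, by omega, ⟨e⟩⟩
    rw [Nat.card_congr e.toEquiv]; simp
  choose M hM hn hiso using hS
  let T := Σ c : S, (pathGraph (M c + 2) ≃g G.induce c.1.supp)
  have hcard : ∀ c : S, Nat.card (pathGraph (M c + 2) ≃g G.induce c.1.supp) = 2 := by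
    intro c
    obtain ⟨e⟩ := hiso c
    refine Eq.trans ?_ (autP (M c))
    exact Nat.card_congr
      { toFun := fun a => a.trans e
        invFun := fun a => a.trans e.symm
        left_inv := by intro a; ext x; simp
        right_inv := by intro a; ext x; simp }
  have hfin : ∀ c : S, Finite (pathGraph (M c + 2) ≃g G.induce c.1.supp) := fun s =>
    Finite.of_injective (fun e => (e : _ → _)) DFunLike.coe_injective
  have hT : Nat.card T = 2 * S.ncard := by
    rw [Nat.card_sigma]
    simp only [hcard]
    rw [Finset.sum_const, smul_eq_mul, Finset.card_univ, ← Nat.card_eq_fintype_card, mul_comm]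
    rfl
  let g : ∀ p : T, pathGraph (M p.1 + 2) ↪g G := fun p =>
    (Embedding.induce _).comp p.2.toEmbedding
  have hgl : ∀ p : T, DL G (g p) := by
    intro p w hw
    obtain ⟨j, rfl, hj⟩ := comp_step p.1.1 p.2 _ w hw
    have : j = ⟨M p.1, by omega⟩ := by
      have := j.isLt
      rw [Fin.ext_iff]; simp at hj ⊢; omega
    rw [this]; rfl
  let F0 : T → (pathGraph (n + 2) ↪g G) := fun p =>
    (g p).comp (suf (n + 2) (M p.1 + 2) (by have := hn p.1; omega))
  have hF0 : ∀ p i (j : Fin (M p.1 + 2)), j.val + n = i.val + M p.1 → F0 p i = g p j := by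
    intro p i j h
    have := hn p.1
    change g p ⟨_, _⟩ = _
    congr 1
    rw [Fin.ext_iff]
    change i.val + (M p.1 + 2 - (n + 2)) = _
    omega
  have hl : ∀ p, F0 p (Fin.last _) = g p (Fin.last _) := by
    intro p; apply hF0; simp; omega
  have hF0d : ∀ p, DL G (F0 p) := by
    intro p w hw
    rw [hl] at hw
    rw [hF0 p _ ⟨M p.1, by omega⟩ (by simp; omega)]
    exact hgl p w hw
  let F : T → {f : pathGraph (n + 2) ↪g G // DL G f} := fun p => ⟨F0 p, hF0d p⟩
  change _ = 2 * S.ncard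
  rw [← hT]
  symm
  apply Nat.card_eq_of_bijective F
  constructor
  · intro p q h
    have h' : g p (Fin.last _) = g q (Fin.last _) := by
      rw [← hl, ← hl]
      exact DFunLike.congr_fun (congrArg Subtype.val h) _
    have hpc : ∀ p : T, G.connectedComponentMk (g p (Fin.last _)) = p.1.1 := by
      intro p
      exact (p.2 (Fin.last _)).2
    have h1 : p.1 = q.1 := by
      apply Subtype.ext
      rw [← hpc p, ← hpc q, h']
    have hp := hgl p
    obtain ⟨s, e⟩ := p
    obtain ⟨s', e'⟩ := q
    dsimp only at h1
    subst h1
    congr 1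
    have := uniqDL hG _ _ h' hp
    ext x
    exact DFunLike.congr_fun this x
  · rintro ⟨f, hf⟩
    obtain ⟨m, G', hm, h1, h2, h3⟩ := maxext hG (Nat.card V) n f hf (by omega)
    have hr := closed_comp hG G' h1 h2 (Fin.last _)
    generalize hcdef : G.connectedComponentMk (G' (Fin.last _)) = c at hr
    let e : pathGraph (m + 2) ≃g G.induce c.supp :=
      { toEquiv := (Equiv.ofInjective G' G'.injective).trans (Equiv.setCongr hr.symm)
        map_rel_iff' := by intro a b; exact G'.map_rel_iff }
    let cs : S := ⟨c, m + 2, by omega, ⟨e.symm⟩⟩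
    have hmM : M cs = m := by
      have h := hM cs
      have h' : Nat.card c.supp = m + 2 := by
        rw [← Nat.card_congr e.toEquiv]; simp
      have : M cs + 2 = m + 2 := by rw [← h, ← h']
      omega
    have he : ∀ i, (e i : V) = G' i := fun i => rfl
    clear_value e
    have main : ∀ k, k = m → ∃ e' : pathGraph (k + 2) ≃g G.induce c.supp,
        ∀ (i : Fin (k + 2)) (j : Fin (m + 2)), i.val = j.val → (e' i : V) = G' j := by
      rintro k rfl
      refine ⟨e, ?_⟩
      intro i j hij
      rw [he]; congr 1; exact Fin.ext hij
    obtain ⟨e', he'⟩ := main _ hmM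
    refine ⟨⟨cs, e'⟩, ?_⟩
    apply Subtype.ext
    ext i
    change F0 ⟨cs, e'⟩ i = f i
    have hi := i.isLt
    rw [hF0 ⟨cs, e'⟩ i ⟨i.val + M cs - n, by have := hn cs; change i.val + M cs - n < M cs + 2; omega⟩
      (by have := hn cs; change i.val + M cs - n + n = i.val + M cs; omega)]
    rw [← h3 i ⟨i.val + m - n, by omega⟩ (by simp; omega)]
    exact he' _ _ (by simp [hmM])

/-- For a graph `G` with maximum degree at most 2 and `k ≥ 3`, the number
of components of `G` that are paths with at least `k-1` vertices equals
`s(G,P_{k-1}) - s(G,P_k) - k·s(G,C_k)`. -/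
theorem stmt_16 {V : Type*} [Fintype V] (G : SimpleGraph V) (k : ℕ) (hk : 3 ≤ k)
    (hdeg : ∀ v, (G.neighborSet v).ncard ≤ 2) :
    (Set.ncard {c : G.ConnectedComponent | ∃ m, k - 1 ≤ m ∧ CompIsPath G c m} : ℤ) =
      (copies G (pathGraph (k - 1)) : ℤ) - (copies G (pathGraph k) : ℤ)
        - (k : ℤ) * (copies G (cycleGraph k) : ℤ) := by 
  obtain ⟨n, rfl⟩ : ∃ n, k = n + 3 := ⟨k - 3, by omega⟩
  have hG := D2_of_ncard G hdeg
  have h4 := count4 hG n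
  rw [cardDL, count5 hG, card_emb_s16, card_emb_s16, card_emb_s16, autP, autC,
    show n + 3 = n + 1 + 2 from rfl, autP] at h4
  have e : n + 3 - 1 = n + 2 := rfl
  rw [e]
  have h4' := congrArg (Nat.cast : ℕ → ℤ) h4
  push_cast at h4' ⊢
  linarith
end

section
/- Let k ≥ 2 and let G be a finite simple graph with maximum degree at most 2 such that no connected component of G is a path with at least k−1 vertices. If 0 < s(G, P_k) ≤ 2k+1, then G has exactly one connected component with more than k vertices, and that component is a cycle with exactly s(G, P_k) vertices. -/
open SimpleGraph

def DegTwo {V : Type*} (G : SimpleGraph V) : Prop :=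
  ∀ v a b c, G.Adj v a → G.Adj v b → G.Adj v c → a = b ∨ a = c ∨ b = c

def HasSeq {V : Type*} (G : SimpleGraph V) (n : ℕ) : Prop :=
  ∃ f : ℕ → V, (∀ i j, i < n → j < n → f i = f j → i = j) ∧
    ∀ i, i + 1 < n → G.Adj (f i) (f (i + 1))

lemma exists_max_seq {V : Type*} [Fintype V] [Nonempty V] (G : SimpleGraph V) :
    ∃ n, 1 ≤ n ∧ HasSeq G n ∧ ¬ HasSeq G (n + 1) := by
  classical
  have hb : ∀ n, HasSeq G n → n ≤ Fintype.card V := by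
    rintro n ⟨f, hf, -⟩
    have := Fintype.card_le_of_injective (fun i : Fin n => f i)
      (fun i j h => Fin.ext (hf i j i.2 j.2 h))
    simpa using this
  have h1 : HasSeq G 1 := by
    refine ⟨fun _ => Classical.arbitrary V, ?_, ?_⟩
    · intro i j hi hj _; omega
    · intro i hi; omega
  by_contra! hcon
  have : ∀ n, HasSeq G (n + 1) := by
    intro n
    induction n with
    | zero => exact h1
    | succ n ih => exact hcon (n + 1) (by omega) ih
  have := hb _ (this (Fintype.card V))
  omega

lemma classify {V : Type*} [Fintype V] (G : SimpleGraph V) (hG : G.Connected) (hd : DegTwo G) :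
    ∃ n, Nonempty (G ≃g pathGraph n) ∨ (3 ≤ n ∧ Nonempty (G ≃g cycleGraph n)) := by
  classical
  have := hG.nonempty
  obtain ⟨n, hn, ⟨f, hf, ha⟩, hmax⟩ := exists_max_seq G
  refine ⟨n, ?_⟩
  have hmid : ∀ i w, 0 < i → i + 1 < n → G.Adj (f i) w → w = f (i - 1) ∨ w = f (i + 1) := by
    intro i w h0 h1 hw
    have a1 := (ha (i - 1) (by omega)).symm
    rw [show i - 1 + 1 = i by omega] at a1
    rcases hd _ _ _ _ a1 (ha i h1) hw with h | h | h
    · have := hf _ _ (by omega) (by omega) h; omega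
    · exact Or.inl h.symm
    · exact Or.inr h.symm
  have hclosed : ∀ i w, i < n → G.Adj (f i) w → ∃ j, j < n ∧ f j = w := by
    intro i w hi hw
    by_contra! hno
    by_cases h1 : i + 1 = n
    · apply hmax
      refine ⟨fun j => if j < n then f j else w, ?_, ?_⟩
      · intro a b ha' hb' h
        by_cases h2 : a < n <;> by_cases h3 : b < n <;> simp only [h2, h3, if_true, if_false] at h
        · exact hf a b h2 h3 h
        · exact absurd h (hno a h2)
        · exact absurd h.symm (hno b h3)
        · omega
      · intro a ha'
        by_cases h3 : a + 1 < n
        · simpa [h3, show a < n by omega] using ha a h3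
        · have : a = i := by omega
          subst this
          simpa [h3, hi] using hw
    by_cases h0 : i = 0
    · subst h0
      apply hmax
      refine ⟨fun j => if j = 0 then w else f (j - 1), ?_, ?_⟩
      · intro a b ha' hb' h
        by_cases h2 : a = 0 <;> by_cases h3 : b = 0 <;> simp only [h2, h3, if_true, if_false] at h
        · omega
        · exact absurd h.symm (hno _ (by omega))
        · exact absurd h (hno _ (by omega))
        · have := hf _ _ (by omega) (by omega) h
          omega
      · intro a ha'
        by_cases h3 : a = 0
        · subst h3
          simpa using hw.symm
        · have := ha (a - 1) (by omega)
          rw [show a - 1 + 1 = a by omega] at this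
          simpa [h3] using this
    · rcases hmid i w (by omega) (by omega) hw with h | h
      · exact hno _ (by omega) h.symm
      · exact hno _ (by omega) h.symm
  have hsurj : ∀ w, ∃ j, j < n ∧ f j = w := by
    intro w
    obtain ⟨p⟩ := hG.preconnected (f 0) w
    have key : ∀ u v (p : G.Walk u v), (∃ j, j < n ∧ f j = u) → ∃ j, j < n ∧ f j = v := by
      intro u v p
      induction p with
      | nil => exact id
      | cons h p ih =>
        rintro ⟨j, hj, rfl⟩
        exact ih (hclosed j _ hj h)
    exact key _ _ p ⟨0, by omega, rfl⟩
  have hadj : ∀ i j, i < j → j < n → G.Adj (f i) (f j) → j = i + 1 ∨ (i = 0 ∧ j + 1 = n) := by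
    intro i j hij hj h
    by_cases h0 : i = 0
    · by_cases h1 : j + 1 = n
      · exact Or.inr ⟨h0, h1⟩
      · rcases hmid j _ (by omega) (by omega) h.symm with h | h
        · have := hf _ _ (by omega) (by omega) h; omega
        · have := hf _ _ (by omega) (by omega) h; omega
    · rcases hmid i _ (by omega) (by omega) h with h | h
      · have := hf _ _ (by omega) (by omega) h; omega
      · have := hf _ _ (by omega) (by omega) h; omega
  let e : Fin n ≃ V := Equiv.ofBijective (fun i : Fin n => f i)
    ⟨fun i j h => Fin.ext (hf i j i.2 j.2 h), fun w => by
      obtain ⟨j, hj, rfl⟩ := hsurj w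
      exact ⟨⟨j, hj⟩, rfl⟩⟩
  have he : ∀ i, e i = f i := fun i => rfl
  by_cases hc : 3 ≤ n ∧ G.Adj (f 0) (f (n - 1))
  · obtain ⟨h3, hc⟩ := hc
    refine Or.inr ⟨h3, ⟨RelIso.symm ⟨e, ?_⟩⟩⟩
    have main : ∀ i j : Fin n, i < j → (G.Adj (f i) (f j) ↔ (cycleGraph n).Adj i j) := by
      intro i j hij
      have hi := i.2
      have hj := j.2
      have hij' : (i : ℕ) < j := hij
      rw [cycleGraph_adj', Fin.sub_val_of_le hij.le, Fin.sub_def]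
      have : ((n - (j : ℕ) + i) % n) = n - j + i := Nat.mod_eq_of_lt (by omega)
      simp only [this]
      constructor
      · intro h
        rcases hadj _ _ hij' hj h with h | h <;> omega
      · rintro (h | h)
        · rw [show (i : ℕ) = 0 by omega, show (j : ℕ) = n - 1 by omega]; exact hc
        · rw [show (j : ℕ) = i + 1 by omega]; exact ha _ (by omega)
    intro i j
    rw [he, he]
    rcases lt_trichotomy i j with h | h | h
    · exact main i j h
    · subst h; simp
    · rw [G.adj_comm, (cycleGraph n).adj_comm]; exact main j i h
  · refine Or.inl ⟨RelIso.symm ⟨e, ?_⟩⟩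
    have main : ∀ i j : Fin n, i < j → (G.Adj (f i) (f j) ↔ (pathGraph n).Adj i j) := by
      intro i j hij
      have hi := i.2
      have hj := j.2
      have hij' : (i : ℕ) < j := hij
      rw [pathGraph_adj]
      constructor
      · intro h
        rcases hadj _ _ hij' hj h with h' | h'
        · omega
        · by_cases h3 : 3 ≤ n
          · exfalso
            apply hc
            refine ⟨h3, ?_⟩
            rw [h'.1, show (j : ℕ) = n - 1 by omega] at h
            exact h
          · omega
      · rintro (h | h)
        · rw [← h]; exact ha _ (by omega)
        · omega
    intro i j
    rw [he, he]
    rcases lt_trichotomy i j with h | h | h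
    · exact main i j h
    · subst h; simp
    · rw [G.adj_comm, (pathGraph n).adj_comm]; exact main j i h

structure CycMap {V : Type*} (G : SimpleGraph V) (c : G.ConnectedComponent) (m : ℕ)
    (g : ZMod m → V) : Prop where
  three : 3 ≤ m
  inj : Function.Injective g
  adj : ∀ x y, G.Adj (g x) (g y) ↔ y = x + 1 ∨ y = x - 1
  mem : ∀ v, v ∈ c.supp ↔ ∃ x, g x = v

lemma CycMap.of {V : Type*} {G : SimpleGraph V} {c : G.ConnectedComponent} {m : ℕ}
    (h : CompIsCycle G c m) : ∃ g, CycMap G c m g := by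
  obtain ⟨h3, ⟨e⟩⟩ := h
  obtain ⟨n, rfl⟩ : ∃ n, m = n + 2 := ⟨m - 2, by omega⟩
  let e' : ZMod (n + 2) → c.supp := fun x => e.symm x
  refine ⟨fun x => (e' x).1, h3, ?_, ?_, ?_⟩
  · intro x y hxy
    exact e.symm.injective (Subtype.ext hxy)
  · intro x y
    have h1 : G.Adj (e' x).1 (e' y).1 ↔ (cycleGraph (n + 2)).Adj x y := e.symm.map_rel_iff
    have h2 : (cycleGraph (n + 2)).Adj x y ↔ x - y = 1 ∨ y - x = 1 := cycleGraph_adj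
    rw [h1, h2]
    constructor
    · rintro (h | h)
      · right; linear_combination -h
      · left; linear_combination h
    · rintro (h | h)
      · right; linear_combination h
      · left; linear_combination -h
  · intro v
    constructor
    · intro hv
      exact ⟨e ⟨v, hv⟩, by simp [e']⟩
    · rintro ⟨x, rfl⟩
      exact (e' x).2

open Classical in
noncomputable def arc {V : Type*} {m : ℕ} (g : ZMod m → V) (k : ℕ) (x : ZMod m) : Finset V :=
  (Finset.range k).image (fun j : ℕ => g (x + j))

lemma mem_arc {V : Type*} {m : ℕ} (g : ZMod m → V) (k : ℕ) (x : ZMod m) (v : V) :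
    v ∈ arc g k x ↔ ∃ j, j < k ∧ g (x + (j : ℕ)) = v := by
  simp [arc]

lemma natCast_inj {m a b : ℕ} (ha : a < m) (hb : b < m) (h : (a : ZMod m) = b) : a = b := by
  rw [ZMod.natCast_eq_natCast_iff'] at h
  rwa [Nat.mod_eq_of_lt ha, Nat.mod_eq_of_lt hb] at h

lemma arc_inj {V : Type*} {m k : ℕ} {g : ZMod m → V} (hg : Function.Injective g)
    (hk : 1 ≤ k) (hkm : k < m) : Function.Injective (arc g k) := by
  intro x y h
  have h1 : g y ∈ arc g k x := by
    rw [h, mem_arc]; exact ⟨0, hk, by simp⟩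
  rw [mem_arc] at h1
  obtain ⟨a, ha, hy⟩ := h1
  have hy := hg hy
  rcases Nat.eq_zero_or_pos a with h0 | h0
  · subst h0; simpa using hy
  · exfalso
    have h2 : g (y - 1) ∈ arc g k y := by
      rw [← h, mem_arc]
      refine ⟨a - 1, by omega, ?_⟩
      rw [← hy]
      push_cast [Nat.cast_sub h0]
      congr 1; ring
    rw [mem_arc] at h2
    obtain ⟨b, hb, hb'⟩ := h2
    have hb' := hg hb'
    have : ((b + 1 : ℕ) : ZMod m) = (0 : ℕ) := by
      push_cast; linear_combination hb'
    have := natCast_inj (by omega) (by omega) this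
    omega

lemma arc_path {V : Type*} {G : SimpleGraph V} {c : G.ConnectedComponent} {m k : ℕ}
    {g : ZMod m → V} (hg : CycMap G c m g) (hkm : k < m) (x : ZMod m) :
    Nonempty ((G.induce (↑(arc g k x) : Set V)) ≃g pathGraph k) := by
  let f : Fin k → (↑(arc g k x) : Set V) := fun i => ⟨g (x + (i : ℕ)), by
    rw [Finset.mem_coe, mem_arc]; exact ⟨i, i.2, rfl⟩⟩
  have hf : Function.Bijective f := by
    constructor
    · intro i j h
      have := hg.inj (congrArg Subtype.val h)
      have := add_left_cancel this
      exact Fin.ext (natCast_inj (by omega) (by omega) this)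
    · rintro ⟨v, hv⟩
      rw [Finset.mem_coe, mem_arc] at hv
      obtain ⟨j, hj, rfl⟩ := hv
      exact ⟨⟨j, hj⟩, rfl⟩
  refine ⟨RelIso.symm ⟨Equiv.ofBijective f hf, ?_⟩⟩
  intro i j
  change G.Adj (g (x + (i : ℕ))) (g (x + (j : ℕ))) ↔ _
  rw [hg.adj, pathGraph_adj]
  have hi := i.2
  have hj := j.2
  constructor
  · rintro (h | h)
    · left
      apply natCast_inj (m := m) (by omega) (by omega)
      push_cast; linear_combination -h
    · right
      apply natCast_inj (m := m) (by omega) (by omega)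
      push_cast; linear_combination h
  · rintro (h | h)
    · left; rw [← h]; push_cast; ring
    · right; rw [← h]; push_cast; ring

lemma path_arc {V : Type*} {G : SimpleGraph V} {c : G.ConnectedComponent} {m k : ℕ}
    {g : ZMod m → V} (hg : CycMap G c m g) (hk : 2 ≤ k) (s : Finset V)
    (e : (G.induce (↑s : Set V)) ≃g pathGraph k)
    (hc : (e.symm ⟨0, by omega⟩).1 ∈ c.supp) :
    k < m ∧ ∃ x, s = arc g k x := by
  have h3 := hg.three
  let h : ℕ → V := fun j => if hj : j < k then (e.symm ⟨j, hj⟩).1 else (e.symm ⟨0, by omega⟩).1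
  have hadj : ∀ i j, i < k → j < k → (G.Adj (h i) (h j) ↔ i + 1 = j ∨ j + 1 = i) := by
    intro i j hi hj
    have h1 : G.Adj (e.symm ⟨i, hi⟩).1 (e.symm ⟨j, hj⟩).1 ↔ (pathGraph k).Adj ⟨i, hi⟩ ⟨j, hj⟩ :=
      e.symm.map_rel_iff
    simp only [h, hi, hj, dif_pos]
    rw [h1, pathGraph_adj]
  have hinj : ∀ i j, i < k → j < k → h i = h j → i = j := by
    intro i j hi hj hij
    simp only [h, hi, hj, dif_pos] at hij
    have := e.symm.injective (Subtype.ext hij)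
    simpa using this
  have hs : ∀ v, v ∈ s ↔ ∃ j, j < k ∧ h j = v := by
    intro v
    constructor
    · intro hv
      refine ⟨e ⟨v, hv⟩, (e ⟨v, hv⟩).2, ?_⟩
      simp [h]
    · rintro ⟨j, hj, rfl⟩
      simp only [h, hj, dif_pos]
      exact (e.symm ⟨j, hj⟩).2
  have h0 : h 0 ∈ c.supp := by
    simpa [h, show 0 < k by omega] using hc
  have hcl : ∀ x w, G.Adj (g x) w → ∃ y, g y = w ∧ (y = x + 1 ∨ y = x - 1) := by
    intro x w hw
    have : w ∈ c.supp := c.mem_supp_of_adj_mem_supp ((hg.mem _).2 ⟨x, rfl⟩) hw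
    obtain ⟨y, rfl⟩ := (hg.mem _).1 this
    exact ⟨y, rfl, (hg.adj _ _).1 hw⟩
  obtain ⟨x, hx⟩ := (hg.mem _).1 h0
  have h01 : G.Adj (g x) (h 1) := by
    rw [hx]; exact (hadj 0 1 (by omega) (by omega)).2 (by omega)
  have key : ∃ ε : ZMod m, (ε = 1 ∨ ε = -1) ∧ ∀ j, j < k → h j = g (x + ε * j) := by
    obtain ⟨y, hy, hy'⟩ := hcl _ _ h01
    have : ∃ ε : ZMod m, (ε = 1 ∨ ε = -1) ∧ y = x + ε := by
      rcases hy' with h | h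
      · exact ⟨1, Or.inl rfl, h⟩
      · exact ⟨-1, Or.inr rfl, by rw [h]; ring⟩
    obtain ⟨ε, hε, rfl⟩ := this
    refine ⟨ε, hε, ?_⟩
    have : ∀ j, j + 1 < k → h j = g (x + ε * j) ∧ h (j + 1) = g (x + ε * (j + 1 : ℕ)) := by
      intro j
      induction j with
      | zero => intro _; simp [hx, hy]
      | succ j ih =>
        intro hj
        obtain ⟨i1, i2⟩ := ih (by omega)
        refine ⟨i2, ?_⟩
        have a := (hadj (j + 1) (j + 2) (by omega) (by omega)).2 (by omega)
        rw [i2] at a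
        obtain ⟨z, hz, hz'⟩ := hcl _ _ a
        have hne : z ≠ x + ε * j := by
          rintro rfl
          have := hinj _ _ (by omega) (by omega) (hz.symm.trans i1.symm)
          omega
        rw [show j + 1 + 1 = j + 2 by omega, ← hz]
        congr 1
        push_cast at hz' ⊢
        rcases hε with rfl | rfl <;> rcases hz' with rfl | rfl
        · ring
        · exact absurd (by ring) hne
        · exact absurd (by ring) hne
        · ring
    intro j hj
    rcases Nat.eq_zero_or_pos j with rfl | hj0
    · simp [hx]
    · have := (this (j - 1) (by omega)).2
      rwa [show j - 1 + 1 = j by omega] at this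
  obtain ⟨ε, hε, hh⟩ := key
  constructor
  · by_contra hkm
    have e1 := hh (m - 1) (by omega)
    have e2 : G.Adj (h 0) (h (m - 1)) := by
      rw [e1, ← hx, hg.adj, Nat.cast_sub (by omega)]
      rcases hε with rfl | rfl
      · right; simp; ring
      · left; simp
    rw [hadj _ _ (by omega) (by omega)] at e2
    omega
  · rcases hε with rfl | rfl
    · refine ⟨x, ?_⟩
      ext v
      rw [hs, mem_arc]
      constructor
      · rintro ⟨j, hj, rfl⟩
        exact ⟨j, hj, by rw [hh j hj]; simp⟩
      · rintro ⟨j, hj, rfl⟩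
        exact ⟨j, hj, by rw [hh j hj]; simp⟩
    · refine ⟨x - (k - 1 : ℕ), ?_⟩
      ext v
      rw [hs, mem_arc]
      constructor
      · rintro ⟨j, hj, rfl⟩
        refine ⟨k - 1 - j, by omega, ?_⟩
        rw [hh j hj, Nat.cast_sub (show j ≤ k - 1 by omega)]
        congr 1; ring
      · rintro ⟨j, hj, rfl⟩
        refine ⟨k - 1 - j, by omega, ?_⟩
        rw [hh _ (by omega), Nat.cast_sub (show j ≤ k - 1 by omega)]
        congr 1; ring

lemma CycMap.card {V : Type*} {G : SimpleGraph V} {c : G.ConnectedComponent} {m : ℕ}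
    {g : ZMod m → V} (hg : CycMap G c m g) : c.supp.ncard = m := by
  have : c.supp = Set.range g := by
    ext v; rw [hg.mem]; rfl
  rw [this, Set.ncard_range_of_injective hg.inj, Nat.card_zmod]

lemma comp_classify {V : Type*} [Fintype V] (G : SimpleGraph V)
    (hdeg : ∀ v, (G.neighborSet v).ncard ≤ 2) (c : G.ConnectedComponent) :
    ∃ n, CompIsPath G c n ∨ CompIsCycle G c n := by
  classical
  have hd : DegTwo G := by
    intro v a b d ha hb hd
    by_contra! h
    have h1 : ({a, b, d} : Set V) ⊆ G.neighborSet v := by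
      rintro w (rfl | rfl | rfl) <;> assumption
    have h2 := Set.ncard_le_ncard h1 (Set.toFinite _)
    have h3 : ({a, b, d} : Set V).ncard = 3 := Set.ncard_eq_three.2 ⟨a, b, d, h.1, h.2.1, h.2.2, rfl⟩
    have := hdeg v
    omega
  have : Fintype c.supp := Fintype.ofFinite _
  exact classify (G.induce c.supp) c.connected_toSimpleGraph (by
    intro v a b d ha hb hd'
    rcases hd v.1 a.1 b.1 d.1 ha hb hd' with h | h | h
    · exact Or.inl (Subtype.ext h)
    · exact Or.inr (Or.inl (Subtype.ext h))
    · exact Or.inr (Or.inr (Subtype.ext h)))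

lemma CompIsPath.card {V : Type*} {G : SimpleGraph V} {c : G.ConnectedComponent} {m : ℕ}
    (h : CompIsPath G c m) : c.supp.ncard = m := by
  obtain ⟨e⟩ := h
  rw [← Nat.card_coe_set_eq, Nat.card_congr e.toEquiv, Nat.card_fin]

lemma path_in_comp {V : Type*} {G : SimpleGraph V} {k : ℕ} (hk : 2 ≤ k) (s : Finset V)
    (e : (G.induce (↑s : Set V)) ≃g pathGraph k) :
    (↑s : Set V) ⊆ (G.connectedComponentMk (e.symm ⟨0, by omega⟩).1).supp := by
  intro v hv
  rw [ConnectedComponent.mem_supp_iff, ConnectedComponent.eq]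
  have h1 := pathGraph_preconnected k (e ⟨v, hv⟩) ⟨0, by omega⟩
  have h2 := (h1.map e.symm.toHom).map (Embedding.induce (G := G) (↑s : Set V)).toHom
  simpa using h2

/-- Let `k ≥ 2` and let `G` have maximum degree at most 2 and no component
that is a path with at least `k-1` vertices. If `0 < s(G,P_k) ≤ 2k+1`, then `G` has
exactly one component with more than `k` vertices, and it is a cycle with `s(G,P_k)`
vertices. -/
theorem stmt_17 {V : Type*} [Fintype V] (G : SimpleGraph V) (k : ℕ) (hk : 2 ≤ k)
    (hdeg : ∀ v, (G.neighborSet v).ncard ≤ 2)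
    (hnopath : ∀ (c : G.ConnectedComponent) (m : ℕ), k - 1 ≤ m → ¬ CompIsPath G c m)
    (hpos : 0 < copies G (pathGraph k)) (hle : copies G (pathGraph k) ≤ 2 * k + 1) :
    ∃ c : G.ConnectedComponent,
      (k < c.supp.ncard ∧ CompIsCycle G c (copies G (pathGraph k))) ∧
      ∀ c' : G.ConnectedComponent, k < c'.supp.ncard → c' = c := by
  have hbig : ∀ c : G.ConnectedComponent, k ≤ c.supp.ncard →
      ∃ m, CompIsCycle G c m ∧ ∃ g, CycMap G c m g := by
    intro c hc
    obtain ⟨m, h | h⟩ := comp_classify G hdeg c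
    · exact absurd h (hnopath c m (by have := h.card; omega))
    · exact ⟨m, h, CycMap.of h⟩
  have hloc : ∀ s : Finset V, Nonempty ((G.induce (↑s : Set V)) ≃g pathGraph k) →
      ∃ c m g, CompIsCycle G c m ∧ CycMap G c m g ∧ k < m ∧ ∃ x, s = arc g k x := by
    rintro s ⟨e⟩
    have hsub := path_in_comp hk s e
    have hcard : (↑s : Set V).ncard = k := by
      rw [← Nat.card_coe_set_eq, Nat.card_congr e.toEquiv, Nat.card_fin]
    have h1 := Set.ncard_le_ncard hsub (Set.toFinite _)
    obtain ⟨m, hm, g, hg⟩ := hbig _ (hcard ▸ h1)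
    exact ⟨_, m, g, hm, hg, path_arc hg hk s e rfl⟩
  have hne : {s : Finset V | Nonempty ((G.induce (↑s : Set V)) ≃g pathGraph k)}.Nonempty :=
    Set.nonempty_of_ncard_ne_zero hpos.ne'
  obtain ⟨s, hs⟩ := hne
  obtain ⟨c, m, g, hm, hg, hkm, -⟩ := hloc s hs
  have huniq : ∀ c' : G.ConnectedComponent, k < c'.supp.ncard → c' = c := by
    intro c' hc'
    by_contra hcc
    obtain ⟨m', -, g', hg'⟩ := hbig c' hc'.le
    rw [hg'.card] at hc'
    have hsub : Set.range (arc g k) ∪ Set.range (arc g' k) ⊆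
        {s : Finset V | Nonempty ((G.induce (↑s : Set V)) ≃g pathGraph k)} := by
      rintro s (⟨x, rfl⟩ | ⟨x, rfl⟩)
      · exact arc_path hg hkm x
      · exact arc_path hg' hc' x
    have hdisj : Disjoint (Set.range (arc g k)) (Set.range (arc g' k)) := by
      rw [Set.disjoint_left]
      rintro _ ⟨x, rfl⟩ ⟨y, hy⟩
      have h1 : g x ∈ arc g' k y := by
        rw [hy, mem_arc]; exact ⟨0, by omega, by simp⟩
      rw [mem_arc] at h1
      obtain ⟨j, -, hj⟩ := h1
      have h2 : g x ∈ c.supp := (hg.mem _).2 ⟨_, rfl⟩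
      have h3 : g x ∈ c'.supp := (hg'.mem _).2 ⟨_, hj⟩
      rw [ConnectedComponent.mem_supp_iff] at h2 h3
      exact hcc (h3.symm.trans h2)
    have h1 := Set.ncard_le_ncard hsub (Set.toFinite _)
    rw [Set.ncard_union_eq hdisj (Set.toFinite _) (Set.toFinite _),
      Set.ncard_range_of_injective (arc_inj hg.inj (by omega) hkm),
      Set.ncard_range_of_injective (arc_inj hg'.inj (by omega) hc'),
      Nat.card_zmod, Nat.card_zmod] at h1
    change _ ≤ copies G (pathGraph k) at h1
    omega
  have hcount : copies G (pathGraph k) = m := by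
    have : {s : Finset V | Nonempty ((G.induce (↑s : Set V)) ≃g pathGraph k)} =
        Set.range (arc g k) := by
      ext s
      constructor
      · rintro ⟨e⟩
        have hsub := path_in_comp hk s e
        have hc : G.connectedComponentMk (e.symm ⟨0, by omega⟩).1 = c := by
          obtain ⟨c', m', g', hm', hg', hkm', x, hx⟩ := hloc s ⟨e⟩
          have := huniq c' (by rw [hg'.card]; exact hkm')
          subst this
          have h1 : (e.symm ⟨0, by omega⟩).1 ∈ s := (e.symm ⟨0, by omega⟩).2
          obtain ⟨j, -, hj⟩ := (mem_arc _ _ _ _).1 ((Finset.ext_iff.1 hx _).1 h1)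
          exact (hg'.mem _).2 ⟨_, hj⟩
        obtain ⟨-, x, hx⟩ := path_arc hg hk s e hc
        exact ⟨x, hx.symm⟩
      · rintro ⟨x, rfl⟩
        exact arc_path hg hkm x
    rw [copies, this, Set.ncard_range_of_injective (arc_inj hg.inj (by omega) hkm), Nat.card_zmod]
  exact ⟨c, ⟨by rw [hg.card]; exact hkm, hcount ▸ hm⟩, huniq⟩
end
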